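/- arXiv:math/0610147 — 10 statements merged into one kernel-verified Lean document; each statement's English description precedes it below -/
import Mathlib

section
/- Let Q ⊆ ℝⁿ be a compact convex set containing 0 in its interior, and suppose that every extreme point of the dual set Q* lies in the lattice ℤⁿ (equivalently, Q* is the convex hull of a finite subset of ℤⁿ). Then the only point of ℤⁿ lying in the interior of Q is 0. -/
/-- The dual set `Q* = {v : ⟨v,u⟩ ≥ -1 for all u ∈ Q}` of a subset of `ℝⁿ`. -/
def dualSet (n : ℕ) (Q : Set (Fin n → ℝ)) : Set (Fin n → ℝ) :=
  {v | ∀ u ∈ Q, -1 ≤ ∑ i, v i * u i}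

/-- A point of `ℝⁿ` lies in the lattice `ℤⁿ`. -/
def IsLatticePoint {n : ℕ} (u : Fin n → ℝ) : Prop :=
  ∀ i, ∃ m : ℤ, u i = (m : ℝ)

/-- If `Q ⊆ ℝⁿ` is a compact convex set containing `0` in its interior and every
extreme point of the dual set `Q*` lies in `ℤⁿ`, then the only point of `ℤⁿ` in the
interior of `Q` is `0`. -/
theorem stmt0 (n : ℕ) (hn : 1 ≤ n) (Q : Set (Fin n → ℝ))
    (hQcomp : IsCompact Q) (hQconv : Convex ℝ Q)
    (h0 : (0 : Fin n → ℝ) ∈ interior Q)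
    (hdual : ∀ v ∈ Set.extremePoints ℝ (dualSet n Q), IsLatticePoint v) :
    ∀ u : Fin n → ℝ, IsLatticePoint u → u ∈ interior Q → u = 0 := by
  intro u hu huQ
  have hconv : Convex ℝ (dualSet n Q) := by
    intro x hx y hy a b ha hb hab w hw
    have h1 := hx w hw
    have h2 := hy w hw
    have : ∑ i, (a • x + b • y) i * w i = a * ∑ i, x i * w i + b * ∑ i, y i * w i := by
      rw [Finset.mul_sum, Finset.mul_sum, ← Finset.sum_add_distrib]
      refine Finset.sum_congr rfl fun i _ => ?_
      simp only [Pi.add_apply, Pi.smul_apply, smul_eq_mul]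
      ring
    rw [this]
    nlinarith
  have hclosed : IsClosed (dualSet n Q) := by
    have : dualSet n Q = ⋂ w ∈ Q, {v : Fin n → ℝ | -1 ≤ ∑ i, v i * w i} := by
      ext v; simp [dualSet]
    rw [this]
    exact isClosed_biInter fun w _ => isClosed_le (by fun_prop) (by fun_prop)
  have hbdd : Bornology.IsBounded (dualSet n Q) := by
    obtain ⟨r, hr, hball⟩ := Metric.mem_nhds_iff.1 (mem_interior_iff_mem_nhds.1 h0)
    have key : ∀ v ∈ dualSet n Q, ∀ i, ∀ s : ℝ, |s| < r → -1 ≤ v i * s := by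
      intro v hv i s hs
      have hm : (Pi.single i s : Fin n → ℝ) ∈ Q := by
        apply hball
        rw [mem_ball_zero_iff, Pi.norm_single]
        simpa using hs
      have := hv _ hm
      simpa [Pi.single_apply] using this
    refine isBounded_iff_forall_norm_le.2 ⟨2 / r, fun v hv => ?_⟩
    refine (pi_norm_le_iff_of_nonneg (by positivity)).2 fun i => ?_
    have h1 := key v hv i (r/2) (by rw [abs_of_pos (by positivity)]; linarith)
    have h2 := key v hv i (-(r/2)) (by rw [abs_neg, abs_of_pos (by positivity)]; linarith)
    rw [Real.norm_eq_abs, le_div_iff₀ hr]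
    rcases abs_cases (v i) with ⟨h, _⟩ | ⟨h, _⟩ <;> rw [h] <;> linarith
  have hcomp : IsCompact (dualSet n Q) := Metric.isCompact_of_isClosed_isBounded hclosed hbdd
  have hext : ∀ v ∈ Set.extremePoints ℝ (dualSet n Q), 0 ≤ ∑ i, v i * u i := by
    intro v hv
    have hint : ∃ m : ℤ, ∑ i, v i * u i = (m : ℝ) := by
      choose a ha using hdual v hv
      choose b hb using hu
      exact ⟨∑ i, a i * b i, by push_cast; simp [ha, hb]⟩
    have hgt : -1 < ∑ i, v i * u i := by
      have hc : Filter.Tendsto (fun e : ℝ => (1 + e) • u) (nhdsWithin 0 (Set.Ioi 0)) (nhds u) := by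
        have : Continuous (fun e : ℝ => (1 + e) • u) := by fun_prop
        have h := this.tendsto 0
        simp only [add_zero, one_smul] at h
        exact h.mono_left nhdsWithin_le_nhds
      obtain ⟨e, he, hpos⟩ := ((hc.eventually (mem_interior_iff_mem_nhds.1 huQ)).and
        self_mem_nhdsWithin).exists
      have hpos : 0 < e := hpos
      have h := hv.1 _ he
      have h3 : ∑ i, v i * ((1 + e) • u) i = (1 + e) * ∑ i, v i * u i := by
        rw [Finset.mul_sum]
        refine Finset.sum_congr rfl fun i _ => ?_
        simp only [Pi.smul_apply, smul_eq_mul]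
        ring
      rw [h3] at h
      by_contra hcon
      nlinarith
    obtain ⟨m, hm⟩ := hint
    rw [hm] at hgt ⊢
    have : -1 < m := by exact_mod_cast hgt
    have : 0 ≤ m := by omega
    exact_mod_cast this
  have hall : ∀ v ∈ dualSet n Q, 0 ≤ ∑ i, v i * u i := by
    intro v hv
    rw [← closure_convexHull_extremePoints hcomp hconv] at hv
    have hsub : closure (convexHull ℝ (Set.extremePoints ℝ (dualSet n Q))) ⊆
        {v : Fin n → ℝ | 0 ≤ ∑ i, v i * u i} := by
      refine closure_minimal (convexHull_min hext ?_) (isClosed_le (by fun_prop) (by fun_prop))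
      intro x hx y hy a b ha hb hab
      have hx : 0 ≤ ∑ i, x i * u i := hx
      have hy : 0 ≤ ∑ i, y i * u i := hy
      have : ∑ i, (a • x + b • y) i * u i = a * ∑ i, x i * u i + b * ∑ i, y i * u i := by
        rw [Finset.mul_sum, Finset.mul_sum, ← Finset.sum_add_distrib]
        refine Finset.sum_congr rfl fun i _ => ?_
        simp only [Pi.add_apply, Pi.smul_apply, smul_eq_mul]
        ring
      show 0 ≤ ∑ i, (a • x + b • y) i * u i
      rw [this]
      positivity
    exact hsub hv
  obtain ⟨C, hC⟩ := hQcomp.exists_bound_of_continuousOn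
    (f := fun w : Fin n → ℝ => ∑ i, u i * w i) (by fun_prop)
  have hscale : ∀ (t : ℝ) (w : Fin n → ℝ), ∑ i, (t • u) i * w i = t * ∑ i, u i * w i := by
    intro t w
    rw [Finset.mul_sum]
    refine Finset.sum_congr rfl fun i _ => ?_
    simp only [Pi.smul_apply, smul_eq_mul]
    ring
  have hCp : 0 < |C| + 1 := by positivity
  have hmem : (-(1 / (|C| + 1))) • u ∈ dualSet n Q := by
    intro w hw
    rw [hscale]
    have h1 := (abs_le.1 (hC w hw)).2
    have h2 : ∑ i, u i * w i ≤ |C| + 1 := by linarith [le_abs_self C]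
    have h3 : (∑ i, u i * w i) / (|C| + 1) ≤ 1 := (div_le_one hCp).2 h2
    have h4 : -(1 / (|C| + 1)) * ∑ i, u i * w i = -((∑ i, u i * w i) / (|C| + 1)) := by ring
    rw [h4]
    linarith
  have h := hall _ hmem
  rw [hscale] at h
  have hp : 0 < 1 / (|C| + 1) := by positivity
  have hle : ∑ i, u i * u i ≤ 0 := by
    by_contra hcon
    push Not at hcon
    nlinarith [mul_pos hp hcon]
  have hz : ∑ i, u i * u i = 0 :=
    le_antisymm hle (Finset.sum_nonneg fun i _ => mul_self_nonneg _)
  funext i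
  have := (Finset.sum_eq_zero_iff_of_nonneg (fun i _ => mul_self_nonneg (u i))).1 hz i
    (Finset.mem_univ i)
  simpa using this
end

section
/- Let a be a positive integer and let Q = conv(S) ⊆ ℝⁿ be a polytope containing 0 in its interior, where S is a finite set each of whose points lies in (1/k)ℤⁿ for some integer k with 1 ≤ k ≤ a. Then the interior of the scaled dual set (1/a)·Q* contains no point of ℤⁿ other than 0; equivalently, for every nonzero v ∈ ℤⁿ there exists u ∈ Q with ⟨v,u⟩ ≤ −1/a. -/
/-- Let `a ≥ 1` and let `Q = conv S ⊆ ℝⁿ` be a polytope containing `0` in its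
interior, where each point of the finite set `S` lies in `(1/k)ℤⁿ` for some integer
`1 ≤ k ≤ a`.  Then for every nonzero `v ∈ ℤⁿ` there is `u ∈ Q` with `⟨v,u⟩ ≤ -1/a`;
equivalently, the interior of `(1/a)·Q*` contains no point of `ℤⁿ` other than `0`. -/
theorem stmt1 (n : ℕ) (hn : 1 ≤ n) (a : ℕ) (ha : 0 < a)
    (S : Set (Fin n → ℝ)) (hSfin : S.Finite)
    (hSlat : ∀ u ∈ S, ∃ k : ℕ, 1 ≤ k ∧ k ≤ a ∧ ∀ i, ∃ m : ℤ, u i = (m : ℝ) / (k : ℝ))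
    (h0 : (0 : Fin n → ℝ) ∈ interior (convexHull ℝ S)) :
    ∀ v : Fin n → ℝ, IsLatticePoint v → v ≠ 0 →
      ∃ u ∈ convexHull ℝ S, ∑ i, v i * u i ≤ -1 / (a : ℝ) := by
  intro v hv hv0
  by_contra hcon
  push Not at hcon
  have haR : (0 : ℝ) < a := by exact_mod_cast ha
  have hS : S ⊆ {u : Fin n → ℝ | 0 ≤ ∑ i, v i * u i} := by
    intro u hu
    have h1 := hcon u (subset_convexHull ℝ S hu)
    obtain ⟨k, hk1, hka, hm⟩ := hSlat u hu
    choose m hm using hm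
    choose w hw using hv
    have hkR : (0 : ℝ) < k := by exact_mod_cast hk1
    have hkaR : (k : ℝ) ≤ a := by exact_mod_cast hka
    have hsum : ∑ i, v i * u i = ((∑ i, w i * m i : ℤ) : ℝ) / k := by
      push_cast
      rw [Finset.sum_div]
      refine Finset.sum_congr rfl fun i _ => ?_
      rw [hw i, hm i, mul_div_assoc]
    rw [Set.mem_setOf_eq, hsum]
    rw [hsum] at h1
    rw [div_lt_div_iff₀ haR hkR] at h1
    have h2 : (0 : ℤ) ≤ ∑ i, w i * m i := by
      by_contra hneg
      have h3 : (∑ i, w i * m i : ℤ) ≤ -1 := by omega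
      have h4 : ((∑ i, w i * m i : ℤ) : ℝ) ≤ -1 := by exact_mod_cast h3
      nlinarith
    have h5 : (0 : ℝ) ≤ ((∑ i, w i * m i : ℤ) : ℝ) := by exact_mod_cast h2
    positivity
  have hconv : Convex ℝ {u : Fin n → ℝ | 0 ≤ ∑ i, v i * u i} := by
    intro x hx y hy s t hs ht _
    simp only [Set.mem_setOf_eq] at hx hy ⊢
    have : ∑ i, v i * (s • x + t • y) i = s * ∑ i, v i * x i + t * ∑ i, v i * y i := by
      rw [Finset.mul_sum, Finset.mul_sum, ← Finset.sum_add_distrib]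
      refine Finset.sum_congr rfl fun i _ => ?_
      simp only [Pi.add_apply, Pi.smul_apply, smul_eq_mul]
      ring
    rw [this]
    positivity
  have hsub := convexHull_min hS hconv
  have hnhds : convexHull ℝ S ∈ nhds (0 : Fin n → ℝ) := mem_interior_iff_mem_nhds.mp h0
  have hcont : Filter.Tendsto (fun ε : ℝ => (-ε) • v) (nhds 0) (nhds 0) := by
    have : Continuous (fun ε : ℝ => (-ε) • v) := by fun_prop
    simpa using this.tendsto 0
  obtain ⟨δ, hδ, hball⟩ := Metric.eventually_nhds_iff.mp (hcont.eventually hnhds)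
  have hmem := hsub (hball (y := δ / 2) (by
    rw [Real.dist_eq, sub_zero, abs_of_pos (by positivity)]
    linarith))
  rw [Set.mem_setOf_eq] at hmem
  have heq : ∑ i, v i * ((-(δ / 2)) • v) i = -(δ / 2) * ∑ i, v i * v i := by
    rw [Finset.mul_sum]
    refine Finset.sum_congr rfl fun i _ => ?_
    simp only [Pi.smul_apply, smul_eq_mul]
    ring
  rw [heq] at hmem
  have hpos : 0 < ∑ i, v i * v i := by
    obtain ⟨j, hj⟩ := Function.ne_iff.mp hv0
    exact Finset.sum_pos' (fun i _ => mul_self_nonneg _)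
      ⟨j, Finset.mem_univ j, mul_self_pos.mpr hj⟩
  nlinarith
end

section
/- Let a be a positive integer and let Q = conv(S) ⊆ ℝⁿ be a polytope containing 0 in its interior, where S is a finite set each of whose points lies in (1/k)ℤⁿ for some integer k with 1 ≤ k ≤ a. Let b > 0 be a real number such that ⟨v,u⟩ ≤ b for all u ∈ Q and all v ∈ Q*. Then the volume of Q* satisfies vol(Q*) ≤ ((b+1)·a)ⁿ. -/
/-- Let `a ≥ 1` and let `Q = conv S ⊆ ℝⁿ` be a polytope containing `0` in its
interior, where each point of the finite set `S` lies in `(1/k)ℤⁿ` for some integer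
`1 ≤ k ≤ a`.  If `b > 0` is such that `⟨v,u⟩ ≤ b` for all `u ∈ Q` and `v ∈ Q*`,
then `vol(Q*) ≤ ((b+1)·a)ⁿ`. -/
theorem stmt2 (n : ℕ) (hn : 1 ≤ n) (a : ℕ) (ha : 0 < a)
    (S : Set (Fin n → ℝ)) (hSfin : S.Finite)
    (hSlat : ∀ u ∈ S, ∃ k : ℕ, 1 ≤ k ∧ k ≤ a ∧ ∀ i, ∃ m : ℤ, u i = (m : ℝ) / (k : ℝ))
    (h0 : (0 : Fin n → ℝ) ∈ interior (convexHull ℝ S))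
    (b : ℝ) (hb : 0 < b)
    (hbnd : ∀ u ∈ convexHull ℝ S, ∀ v ∈ dualSet n (convexHull ℝ S),
      ∑ i, v i * u i ≤ b) :
    MeasureTheory.volume (dualSet n (convexHull ℝ S)) ≤
      ENNReal.ofReal (((b + 1) * (a : ℝ)) ^ n) := by
  have hspan : Submodule.span ℝ S = ⊤ := by
    apply Submodule.eq_top_of_nonempty_interior'
    refine ⟨0, interior_mono ?_ h0⟩
    exact convexHull_min Submodule.subset_span (Submodule.convex _)
  obtain ⟨f, hfS, hli⟩ : ∃ f : Fin n → (Fin n → ℝ), (∀ i, f i ∈ S) ∧ LinearIndependent ℝ f := by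
    have hr : Module.finrank ℝ (Submodule.span ℝ S) = n := by
      rw [hspan]; simp
    obtain ⟨f, h1, -, h3⟩ := Submodule.exists_fun_fin_finrank_span_eq ℝ S
    refine ⟨fun i => f (Fin.cast hr.symm i), fun i => h1 _, ?_⟩
    exact h3.comp _ (Fin.cast_injective _)
  choose k hk1 hka m hm using fun i => hSlat (f i) (hfS i)
  let A : Matrix (Fin n) (Fin n) ℝ := Matrix.of f
  have hA : A.det ≠ 0 := by
    have : IsUnit A := Matrix.linearIndependent_rows_iff_isUnit.1 hli
    exact ((Matrix.isUnit_iff_isUnit_det A).1 this).ne_zero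
  let M : Matrix (Fin n) (Fin n) ℤ := Matrix.of m
  have hk0 : ∀ i, (0:ℝ) < k i := fun i => by exact_mod_cast hk1 i
  have hdet : (M.det : ℝ) = (∏ i, (k i : ℝ)) * A.det := by
    rw [← Matrix.det_mul_column]
    have h := (Int.castRingHom ℝ).map_det M
    simp only [eq_intCast] at h
    rw [h]
    congr 1
    ext i j
    have := hm i j
    have := (hk0 i).ne'
    simp [M, A, hm i j]
    field_simp
  have hprod0 : 0 < ∏ i, (k i : ℝ) := Finset.prod_pos fun i _ => hk0 i
  have hM : (1:ℝ) ≤ |(M.det : ℝ)| := by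
    have h : M.det ≠ 0 := by
      intro h
      rw [h] at hdet
      simp only [Int.cast_zero] at hdet
      exact mul_ne_zero hprod0.ne' hA hdet.symm
    exact_mod_cast Int.one_le_abs h
  have hprod : ∏ i, (k i : ℝ) ≤ (a : ℝ) ^ n := by
    calc ∏ i, (k i : ℝ) ≤ ∏ i : Fin n, (a : ℝ) :=
          Finset.prod_le_prod (fun i _ => (hk0 i).le) fun i _ => by exact_mod_cast hka i
      _ = _ := by simp
  have hinv : |A.det⁻¹| ≤ (a : ℝ) ^ n := by
    rw [abs_inv]
    have hp : 0 < |A.det| := abs_pos.2 hA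
    rw [hdet, abs_mul, abs_of_pos hprod0] at hM
    rw [inv_le_iff_one_le_mul₀ hp]
    exact hM.trans (mul_le_mul_of_nonneg_right hprod hp.le)
  have hsub : dualSet n (convexHull ℝ S) ⊆
      (Matrix.toLin' A) ⁻¹' (Set.Icc (fun _ => (-1:ℝ)) (fun _ => b)) := by
    intro v hv
    have e : ∀ i, Matrix.toLin' A v i = ∑ j, v j * f i j := by
      intro i
      simp [A, Matrix.mulVec, dotProduct, mul_comm]
    refine ⟨fun i => ?_, fun i => ?_⟩
    · rw [e]; exact hv _ (subset_convexHull ℝ S (hfS i))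
    · rw [e]; exact hbnd _ (subset_convexHull ℝ S (hfS i)) v hv
  refine (MeasureTheory.measure_mono hsub).trans ?_
  rw [MeasureTheory.Measure.addHaar_preimage_linearMap _ (by rwa [LinearMap.det_toLin']),
    LinearMap.det_toLin', Real.volume_Icc_pi]
  simp only [sub_neg_eq_add, Finset.prod_const, Finset.card_univ, Fintype.card_fin]
  rw [← ENNReal.ofReal_pow (by linarith), ← ENNReal.ofReal_mul (abs_nonneg _)]
  apply ENNReal.ofReal_le_ofReal
  rw [mul_pow, mul_comm]
  exact mul_le_mul_of_nonneg_left hinv (by positivity)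
end

section
/- Let n ≥ 1 and let Q ⊆ ℝⁿ be a polytope containing 0 in its interior with (finite) vertex set S, and let a : S → ℤ assign to each vertex a positive integer weight. Assume: (i) for every extreme point v of the dual polytope Q*, the facet F_v = {u ∈ Q : ⟨v,u⟩ = −1} has exactly n vertices e₁,…,eₙ, and the vectors (a(e₁)·e₁, …, a(eₙ)·eₙ) form a ℤ-basis of the lattice ℤⁿ; (ii) r := #S − n satisfies r ≥ 2; (iii) C is a real number such that Σ_{s∈T} a(s) ≤ C for every subset T ⊆ S with at most n elements. Then for every vertex u of Q and every extreme point v of Q*, one has 0 ≤ a(u)·(1 + ⟨v,u⟩) ≤ C^r. -/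
def FD (n : ℕ) (S : Finset (Fin n → ℝ)) (a : (Fin n → ℝ) → ℤ) (v : Fin n → ℝ)
    (e g : Fin n → (Fin n → ℝ)) : Prop :=
  Function.Injective e ∧ (∀ i, e i ∈ S) ∧ (∀ s ∈ S, (v ⬝ᵥ s = -1 ↔ ∃ i, e i = s)) ∧
  (∀ x : Fin n → ℝ, x = ∑ j, (g j ⬝ᵥ x) • ((a (e j) : ℝ) • e j)) ∧
  (∀ i j, g j ⬝ᵥ ((a (e i) : ℝ) • e i) = if i = j then 1 else 0) ∧
  (∀ j k, ∃ z : ℤ, g j k = z) ∧ (∀ j k, ∃ z : ℤ, (a (e j) : ℝ) * e j k = z)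

lemma exists_FD (n : ℕ) (S : Finset (Fin n → ℝ)) (a : (Fin n → ℝ) → ℤ) (v : Fin n → ℝ)
    (h : ∃ e : Fin n → (Fin n → ℝ), Function.Injective e ∧ (∀ i, e i ∈ S) ∧
        (∀ s ∈ S, ((∑ j, v j * s j = -1) ↔ ∃ i, e i = s)) ∧
        ∃ M : Matrix (Fin n) (Fin n) ℤ,
          (∀ i j, ((M i j : ℤ) : ℝ) = (a (e i) : ℝ) * e i j) ∧ IsUnit M.det) :
    ∃ e g, FD n S a v e g := by
  obtain ⟨e, h1, h2, h3, M, hM, hdet⟩ := h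
  have hr : ∀ i, (a (e i) : ℝ) • e i = fun k => ((M i k : ℤ) : ℝ) := by
    intro i; ext k; simp [hM]
  refine ⟨e, fun j k => ((M⁻¹ k j : ℤ) : ℝ), h1, h2, h3, ?_, ?_, ?_, ?_⟩
  · intro x
    have h := Matrix.nonsing_inv_mul M hdet
    ext l
    simp only [hr, Finset.sum_apply, Pi.smul_apply, smul_eq_mul, dotProduct, Finset.sum_mul]
    rw [Finset.sum_comm]
    have : ∀ k, ∑ j, ((M⁻¹ k j : ℤ) : ℝ) * x k * ((M j l : ℤ) : ℝ) = if k = l then x k else 0 := by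
      intro k
      have h' := congrFun (congrFun h k) l
      rw [Matrix.mul_apply, Matrix.one_apply] at h'
      have h'' : ∑ j, ((M⁻¹ k j : ℤ) : ℝ) * ((M j l : ℤ) : ℝ) = if k = l then 1 else 0 := by
        exact_mod_cast h'
      calc _ = x k * ∑ j, ((M⁻¹ k j : ℤ) : ℝ) * ((M j l : ℤ) : ℝ) := by
            rw [Finset.mul_sum]; apply Finset.sum_congr rfl; intros; ring
        _ = _ := by rw [h'']; simp
    simp [this]
  · intro i j
    have h' := congrFun (congrFun (Matrix.mul_nonsing_inv M hdet) i) j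
    rw [Matrix.mul_apply, Matrix.one_apply] at h'
    have h'' : ∑ k, ((M i k : ℤ) : ℝ) * ((M⁻¹ k j : ℤ) : ℝ) = if i = j then 1 else 0 := by
      exact_mod_cast h'
    rw [hr, ← h'']
    simp [dotProduct, mul_comm]
  · intro j k; exact ⟨_, rfl⟩
  · intro j k; exact ⟨_, (hM j k).symm⟩

lemma dual_iff (n : ℕ) (S : Finset (Fin n → ℝ)) (v : Fin n → ℝ) :
    v ∈ dualSet n (convexHull ℝ (S : Set (Fin n → ℝ))) ↔ ∀ s ∈ S, -1 ≤ v ⬝ᵥ s := by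
  constructor
  · intro h s hs
    exact h s (subset_convexHull ℝ _ hs)
  · intro h u hu
    have hc : Convex ℝ {u : Fin n → ℝ | -1 ≤ v ⬝ᵥ u} := by
      intro x hx y hy p q hp hq hpq
      simp only [Set.mem_ofPred_eq, dotProduct_add, dotProduct_smul, smul_eq_mul] at *
      nlinarith
    exact convexHull_min (fun s hs => h s hs) hc hu

lemma dual_compact (n : ℕ) (Q : Set (Fin n → ℝ)) (h0 : (0 : Fin n → ℝ) ∈ interior Q) :
    IsCompact (dualSet n Q) := by
  obtain ⟨ε, hε, hb⟩ := Metric.mem_nhds_iff.1 (mem_interior_iff_mem_nhds.1 h0)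
  apply Metric.isCompact_of_isClosed_isBounded
  · have : dualSet n Q = ⋂ u ∈ Q, {v : Fin n → ℝ | -1 ≤ ∑ i, v i * u i} := by
      ext v; simp [dualSet]
    rw [this]
    refine isClosed_biInter fun u _ => isClosed_le continuous_const (by fun_prop)
  · apply (Metric.isBounded_closedBall (x := (0 : Fin n → ℝ)) (r := 2 / ε)).subset
    intro v hv
    rw [mem_closedBall_zero_iff, pi_norm_le_iff_of_nonneg (by positivity)]
    intro i
    have key : ∀ t : ℝ, |t| = ε / 2 → -1 ≤ v i * t := by
      intro t ht
      have := hv (Pi.single i t) (hb (by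
        rw [mem_ball_zero_iff, Pi.norm_single, Real.norm_eq_abs, ht]; linarith))
      have h2 : ∑ j, v j * (Pi.single i t : Fin n → ℝ) j = v i * t := dotProduct_single v t i
      rwa [h2] at this
    have k1 := key (ε / 2) (abs_of_pos (by positivity))
    have k2 := key (-(ε / 2)) (by rw [abs_neg]; exact abs_of_pos (by positivity))
    rw [Real.norm_eq_abs, abs_le, ← neg_div, div_le_iff₀ hε, le_div_iff₀ hε]
    constructor <;> linarith

lemma cover (n : ℕ) (S : Finset (Fin n → ℝ)) (a : (Fin n → ℝ) → ℤ)
    (h0 : (0 : Fin n → ℝ) ∈ interior (convexHull ℝ (S : Set (Fin n → ℝ))))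
    (hapos : ∀ s ∈ S, 0 < a s)
    (hF : ∀ v ∈ Set.extremePoints ℝ (dualSet n (convexHull ℝ (S : Set (Fin n → ℝ)))),
      ∃ e g, FD n S a v e g) (x : Fin n → ℝ) :
    ∃ v ∈ Set.extremePoints ℝ (dualSet n (convexHull ℝ (S : Set (Fin n → ℝ)))),
      ∃ e g, FD n S a v e g ∧ ∀ j, 0 ≤ g j ⬝ᵥ x := by
  set D := dualSet n (convexHull ℝ (S : Set (Fin n → ℝ))) with hD
  have hcomp : IsCompact D := dual_compact n _ h0
  have hne : D.Nonempty := ⟨0, fun u _ => by simp⟩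
  have hcont : Continuous fun v : Fin n → ℝ => v ⬝ᵥ x := by unfold dotProduct; fun_prop
  obtain ⟨v0, hv0, hmin⟩ := hcomp.exists_isMinOn hne hcont.continuousOn
  have hmin' : ∀ v ∈ D, v0 ⬝ᵥ x ≤ v ⬝ᵥ x := fun v hv => hmin hv
  set B := {v | v ∈ D ∧ v ⬝ᵥ x = v0 ⬝ᵥ x} with hB
  have hBc : IsCompact B := hcomp.inter_right (isClosed_eq hcont continuous_const)
  obtain ⟨v, hv⟩ := hBc.extremePoints_nonempty ⟨v0, hv0, rfl⟩
  have hvB : v ∈ B := hv.1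
  have hvext : v ∈ D.extremePoints ℝ := by
    rw [mem_extremePoints_iff_left] at hv ⊢
    refine ⟨hvB.1, fun y hy z hz hyz => ?_⟩
    have hyz' := hyz
    obtain ⟨p, q, hp, hq, hpq, rfl⟩ := hyz
    have h1 := hmin' y hy
    have h2 := hmin' z hz
    have h3 := hvB.2
    simp only [add_dotProduct, smul_dotProduct, smul_eq_mul] at h3
    have hy' : y ⬝ᵥ x = v0 ⬝ᵥ x := by
      obtain rfl : q = 1 - p := by linarith
      nlinarith
    have hz' : z ⬝ᵥ x = v0 ⬝ᵥ x := by
      obtain rfl : q = 1 - p := by linarith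
      nlinarith
    exact hv.2 y ⟨hy, hy'⟩ z ⟨hz, hz'⟩ hyz'
  obtain ⟨e, g, hfd⟩ := hF v hvext
  refine ⟨v, hvext, e, g, hfd, ?_⟩
  obtain ⟨h1, h2, h3, h4, h5, h6, h7⟩ := hfd
  intro j
  by_contra hneg
  push Not at hneg
  have hvD : ∀ s ∈ S, -1 ≤ v ⬝ᵥ s := (dual_iff n S v).1 hvB.1
  -- small t
  have hs : ∀ s ∈ S, ∀ᶠ t : ℝ in nhdsWithin 0 (Set.Ioi 0), -1 ≤ (v + t • g j) ⬝ᵥ s := by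
    intro s hs
    by_cases hvs : v ⬝ᵥ s = -1
    · obtain ⟨i, rfl⟩ := (h3 s hs).1 hvs
      filter_upwards [self_mem_nhdsWithin] with t ht
      have ht : 0 < t := ht
      have := h5 i j
      have hai : (0 : ℝ) < a (e i) := by exact_mod_cast hapos _ hs
      rw [dotProduct_smul, smul_eq_mul] at this
      rw [add_dotProduct, smul_dotProduct, smul_eq_mul, hvs]
      have : 0 ≤ g j ⬝ᵥ e i := by
        by_contra hc
        push Not at hc
        have := mul_neg_of_pos_of_neg hai hc
        split_ifs at * <;> linarith
      have := mul_nonneg ht.le this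
      linarith
    · have hlt : -1 < v ⬝ᵥ s := lt_of_le_of_ne (hvD s hs) (Ne.symm hvs)
      have hct : Continuous fun t : ℝ => (v + t • g j) ⬝ᵥ s := by
        simp only [add_dotProduct, smul_dotProduct, smul_eq_mul]; fun_prop
      have : ∀ᶠ t : ℝ in nhds 0, -1 < (v + t • g j) ⬝ᵥ s :=
        hct.continuousAt.eventually_const_lt (by simpa using hlt)
      filter_upwards [nhdsWithin_le_nhds this] with t ht using ht.le
  have hall := (Filter.eventually_all_finset S).2 hs
  obtain ⟨t, ht, htpos⟩ := (hall.and self_mem_nhdsWithin).exists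
  have htpos : 0 < t := htpos
  have := hmin' _ ((dual_iff n S _).2 ht)
  rw [add_dotProduct, smul_dotProduct, smul_eq_mul, hvB.2] at this
  have := mul_neg_of_pos_of_neg htpos hneg
  linarith

lemma ext_mem {n : ℕ} {S : Finset (Fin n → ℝ)}
    (hvert : Set.extremePoints ℝ (convexHull ℝ (S : Set (Fin n → ℝ))) = (S : Set (Fin n → ℝ)))
    {T : Set (Fin n → ℝ)} (hT : T ⊆ convexHull ℝ (S : Set (Fin n → ℝ))) {w : Fin n → ℝ}
    (hw : w ∈ S) (hwT : w ∈ convexHull ℝ T) : w ∈ T := by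
  by_contra hc
  have h1 : w ∈ Set.extremePoints ℝ (convexHull ℝ (S : Set (Fin n → ℝ))) := by
    rw [hvert]; exact hw
  rw [(convex_convexHull ℝ _).mem_extremePoints_iff_mem_sdiff_convexHull_sdiff] at h1
  have hsub : T ⊆ convexHull ℝ (S : Set (Fin n → ℝ)) \ {w} := by
    intro y hy
    refine ⟨hT hy, ?_⟩
    rintro rfl
    exact hc hy
  exact h1.2 (convexHull_mono hsub hwT)

lemma zero_notMem {n : ℕ} (hn : 1 ≤ n) {S : Finset (Fin n → ℝ)}
    (hvert : Set.extremePoints ℝ (convexHull ℝ (S : Set (Fin n → ℝ))) = (S : Set (Fin n → ℝ)))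
    (h0 : (0 : Fin n → ℝ) ∈ interior (convexHull ℝ (S : Set (Fin n → ℝ)))) :
    (0 : Fin n → ℝ) ∉ S := by
  intro h
  have h1 : (0 : Fin n → ℝ) ∈ Set.extremePoints ℝ (convexHull ℝ (S : Set (Fin n → ℝ))) := by
    rw [hvert]; exact h
  obtain ⟨ε, hε, hb⟩ := Metric.mem_nhds_iff.1 (mem_interior_iff_mem_nhds.1 h0)
  have key : ∀ t : ℝ, |t| = ε / 2 → (Pi.single ⟨0, hn⟩ t : Fin n → ℝ) ∈
      convexHull ℝ (S : Set (Fin n → ℝ)) := fun t ht => hb (by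
        rw [mem_ball_zero_iff, Pi.norm_single, Real.norm_eq_abs, ht]; linarith)
  have k1 := key (ε / 2) (abs_of_pos (by positivity))
  have k2 := key (-(ε / 2)) (by rw [abs_neg]; exact abs_of_pos (by positivity))
  rw [mem_extremePoints_iff_left] at h1
  have := h1.2 _ k1 _ k2 ⟨1/2, 1/2, by norm_num, by norm_num, by norm_num, by
    ext i; simp [Pi.single_neg]⟩
  have := congrFun this ⟨0, hn⟩
  simp at this
  linarith

lemma FD_coord {n : ℕ} {S : Finset (Fin n → ℝ)} {a : (Fin n → ℝ) → ℤ} {v : Fin n → ℝ}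
    {e g : Fin n → (Fin n → ℝ)} (h : FD n S a v e g) (y x : Fin n → ℝ) :
    y ⬝ᵥ x = ∑ j, (g j ⬝ᵥ x) * ((a (e j) : ℝ) * (y ⬝ᵥ e j)) := by
  conv_lhs => rw [h.2.2.2.1 x]
  simp only [dotProduct_sum, dotProduct_smul, smul_eq_mul]

lemma FD_v {n : ℕ} {S : Finset (Fin n → ℝ)} {a : (Fin n → ℝ) → ℤ} {v : Fin n → ℝ}
    {e g : Fin n → (Fin n → ℝ)} (h : FD n S a v e g) (i : Fin n) : v ⬝ᵥ e i = -1 :=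
  (h.2.2.1 _ (h.2.1 i)).2 ⟨i, rfl⟩

lemma integral_vert (n : ℕ) (hn : 1 ≤ n) (S : Finset (Fin n → ℝ)) (a : (Fin n → ℝ) → ℤ)
    (hvert : Set.extremePoints ℝ (convexHull ℝ (S : Set (Fin n → ℝ))) = (S : Set (Fin n → ℝ)))
    (h0 : (0 : Fin n → ℝ) ∈ interior (convexHull ℝ (S : Set (Fin n → ℝ))))
    (hapos : ∀ s ∈ S, 0 < a s)
    (hF : ∀ v ∈ Set.extremePoints ℝ (dualSet n (convexHull ℝ (S : Set (Fin n → ℝ)))),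
      ∃ e g, FD n S a v e g) (w : Fin n → ℝ) (hw : w ∈ S) (k : Fin n) :
    ∃ z : ℤ, (a w : ℝ) * w k = z := by
  obtain ⟨v, hv, e, g, hfd, hnn⟩ := cover n S a h0 hapos hF w
  have hw0 : w ≠ 0 := fun h => zero_notMem hn hvert h0 (h ▸ hw)
  have hvw := (dual_iff n S v).1 hv.1 w hw
  rw [FD_coord hfd] at hvw
  simp only [FD_v hfd] at hvw
  have hex := hfd.2.2.2.1 w
  have hmem : w ∈ insert 0 (Set.range e) := by
    apply ext_mem hvert _ hw
    · set c : Fin n → ℝ := fun j => (g j ⬝ᵥ w) * a (e j) with hc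
      have hc0 : ∀ j, 0 ≤ c j := fun j => mul_nonneg (hnn j)
        (by exact_mod_cast (hapos _ (hfd.2.1 j)).le)
      have hc1 : ∑ j, c j ≤ 1 := by
        have : ∑ j, (g j ⬝ᵥ w) * ((a (e j) : ℝ) * -1) = - ∑ j, c j := by
          rw [← Finset.sum_neg_distrib]; apply Finset.sum_congr rfl; intros; simp [hc]
        linarith
      have hwe : w = ∑ j : Option (Fin n), (j.elim (1 - ∑ j, c j) c) • (j.elim 0 e : Fin n → ℝ) := by
        rw [Fintype.sum_option]
        simp only [Option.elim, smul_zero, zero_add, hc, mul_smul]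
        exact hex
      rw [hwe]
      apply (convex_convexHull ℝ _).sum_mem
      · rintro (_ | j) _
        · simpa using hc1
        · exact hc0 j
      · rw [Fintype.sum_option]; simp
      · rintro (_ | j) _ <;> apply subset_convexHull <;> simp
    · rintro y (rfl | ⟨j, rfl⟩)
      · exact interior_subset h0
      · exact subset_convexHull ℝ _ (hfd.2.1 j)
  rcases hmem with h | ⟨j, rfl⟩
  · exact absurd h hw0
  · exact hfd.2.2.2.2.2.2 j k

lemma not_simplex (n : ℕ) (S : Finset (Fin n → ℝ)) (a : (Fin n → ℝ) → ℤ)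
    (hvert : Set.extremePoints ℝ (convexHull ℝ (S : Set (Fin n → ℝ))) = (S : Set (Fin n → ℝ)))
    (hapos : ∀ s ∈ S, 0 < a s) (r : ℕ) (hcard : S.card = n + r) (hr : 2 ≤ r)
    (v : Fin n → ℝ) (hv : ∀ s ∈ S, -1 ≤ v ⬝ᵥ s) (e g : Fin n → (Fin n → ℝ))
    (hfd : FD n S a v e g) (u : Fin n → ℝ) (hu : u ∈ S) (hue : v ⬝ᵥ u ≠ -1)
    (vi : Fin n → (Fin n → ℝ)) (hvi : ∀ i, ∀ s ∈ S, -1 ≤ vi i ⬝ᵥ s)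
    (hvu : ∀ i, vi i ⬝ᵥ u = -1) (hve : ∀ i j, j ≠ i → vi i ⬝ᵥ e j = -1) : False := by
  classical
  have hlt : (insert u (Finset.univ.image e)).card < S.card := by
    have h1 := Finset.card_insert_le u (Finset.univ.image e)
    have h2 : (Finset.univ.image e).card ≤ n := by
      simpa using Finset.card_image_le (s := (Finset.univ : Finset (Fin n))) (f := e)
    omega
  obtain ⟨w, hw, hwn⟩ := Finset.exists_mem_notMem_of_card_lt_card hlt
  apply hwn
  have hupos : 0 < 1 + v ⬝ᵥ u := by
    have := lt_of_le_of_ne (hv u hu) (Ne.symm hue); linarith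
  set l := (1 + v ⬝ᵥ w) / (1 + v ⬝ᵥ u) with hl
  have hl0 : 0 ≤ l := div_nonneg (by linarith [hv w hw]) hupos.le
  have hlm : l * (1 + v ⬝ᵥ u) = 1 + v ⬝ᵥ w := div_mul_cancel₀ _ hupos.ne'
  have hap : ∀ i, (0 : ℝ) < a (e i) := fun i => by exact_mod_cast hapos _ (hfd.2.1 i)
  -- coordinates
  set d : Fin n → (Fin n → ℝ) → ℝ := fun j x => (g j ⬝ᵥ x) * a (e j) with hd
  have hvx : ∀ x, v ⬝ᵥ x = - ∑ j, d j x := by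
    intro x
    rw [FD_coord hfd, ← Finset.sum_neg_distrib]
    apply Finset.sum_congr rfl; intro j _; rw [FD_v hfd]; simp [hd]
  have hdiff : ∀ i x, vi i ⬝ᵥ x - v ⬝ᵥ x = d i x * (vi i ⬝ᵥ e i + 1) := by
    intro i x
    rw [← sub_dotProduct, FD_coord hfd, Finset.sum_eq_single i]
    · rw [sub_dotProduct, FD_v hfd]; simp only [hd]; ring
    · intro j _ hj
      rw [sub_dotProduct, FD_v hfd, hve i j hj]; simp
    · simp
  have hcoef : ∀ i, 0 ≤ d i w - l * d i u := by
    intro i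
    have h1 := hdiff i u
    have h2 := hdiff i w
    have h3 := hvi i w hw
    have h4 := hvi i (e i) (hfd.2.1 i)
    rw [hvu] at h1
    have h5 : 0 < vi i ⬝ᵥ e i + 1 := by
      rcases (by linarith : 0 ≤ vi i ⬝ᵥ e i + 1).lt_or_eq with h | h
      · exact h
      · rw [← h] at h1; linarith
    have h6 : 0 ≤ (d i w - l * d i u) * (vi i ⬝ᵥ e i + 1) := by
      have : (d i w - l * d i u) * (vi i ⬝ᵥ e i + 1)
        = (vi i ⬝ᵥ w - v ⬝ᵥ w) - l * (-1 - v ⬝ᵥ u) := by rw [h1, h2]; ring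
      rw [this]; linarith
    exact nonneg_of_mul_nonneg_left h6 h5
  have hx : ∀ x, x = ∑ j, d j x • e j := by
    intro x
    have := hfd.2.2.2.1 x
    simpa only [hd, mul_smul] using this
  have hsub : w = ∑ j : Option (Fin n), (j.elim l (fun j => d j w - l * d j u)) •
      (j.elim u e : Fin n → ℝ) := by
    rw [Fintype.sum_option]
    simp only [Option.elim, sub_smul, Finset.sum_sub_distrib, mul_smul]
    rw [← Finset.smul_sum, ← hx u, ← hx w]; simp
  have hmem : w ∈ insert u (Set.range e) := by
    apply ext_mem hvert _ hw
    · rw [hsub]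
      apply (convex_convexHull ℝ _).sum_mem
      · rintro (_ | j) _
        · exact hl0
        · exact hcoef j
      · rw [Fintype.sum_option]
        simp only [Option.elim, Finset.sum_sub_distrib, ← Finset.mul_sum]
        have := hvx u
        have := hvx w
        have h1 : ∑ j, d j w = - (v ⬝ᵥ w) := by linarith
        have h2 : ∑ j, d j u = - (v ⬝ᵥ u) := by linarith
        rw [h1, h2]; linarith
      · rintro (_ | j) _ <;> apply subset_convexHull <;> simp
    · rintro y (rfl | ⟨j, rfl⟩)
      · exact subset_convexHull ℝ _ hu
      · exact subset_convexHull ℝ _ (hfd.2.1 j)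
  simpa using hmem

/-- the key recursive step -/
lemma step (n : ℕ) (hn : 1 ≤ n) (S : Finset (Fin n → ℝ)) (a : (Fin n → ℝ) → ℤ)
    (hvert : Set.extremePoints ℝ (convexHull ℝ (S : Set (Fin n → ℝ))) = (S : Set (Fin n → ℝ)))
    (h0 : (0 : Fin n → ℝ) ∈ interior (convexHull ℝ (S : Set (Fin n → ℝ))))
    (hapos : ∀ s ∈ S, 0 < a s)
    (hF : ∀ v ∈ Set.extremePoints ℝ (dualSet n (convexHull ℝ (S : Set (Fin n → ℝ)))),
      ∃ e g, FD n S a v e g) (r : ℕ) (hcard : S.card = n + r) (hr : 2 ≤ r)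
    (C : ℝ) (hC : ∀ T ⊆ S, T.card ≤ n → ∑ s ∈ T, (a s : ℝ) ≤ C)
    (v : Fin n → ℝ)
    (hv : v ∈ Set.extremePoints ℝ (dualSet n (convexHull ℝ (S : Set (Fin n → ℝ)))))
    (u : Fin n → ℝ) (hu : u ∈ S) (hue : v ⬝ᵥ u ≠ -1) (K : ℝ) (hK : 1 ≤ K)
    (hrec : ∀ f ∈ S, (a f : ℝ) * (1 + v ⬝ᵥ f) < a u * (1 + v ⬝ᵥ u) →
      (a f : ℝ) * (1 + v ⬝ᵥ f) ≤ K) :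
    (a u : ℝ) * (1 + v ⬝ᵥ u) ≤ C * K := by
  classical
  obtain ⟨e, g, hfd⟩ := hF v hv
  have hvS := (dual_iff n S v).1 hv.1
  have hap : ∀ s ∈ S, (1 : ℝ) ≤ a s := fun s hs => by exact_mod_cast hapos _ hs
  have hex : ∃ i, ∀ v' ∈ Set.extremePoints ℝ (dualSet n (convexHull ℝ (S : Set (Fin n → ℝ)))),
      ¬ (v' ⬝ᵥ u = -1 ∧ ∀ j, j ≠ i → v' ⬝ᵥ e j = -1) := by
    by_contra hc
    push Not at hc
    choose vi h1 h2 h3 using hc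
    exact not_simplex n S a hvert hapos r hcard hr v hvS e g hfd u hu hue vi
      (fun i => (dual_iff n S _).1 (h1 i).1) h2 h3
  obtain ⟨i, hi⟩ := hex
  set E := (Finset.univ.erase i).image e with hE
  have huE : u ∉ E := by
    intro h
    obtain ⟨j, _, hj⟩ := Finset.mem_image.1 h
    exact hue (hj ▸ FD_v hfd j)
  set T := insert u E with hT
  have hES : E ⊆ S := by
    intro s hs
    obtain ⟨j, _, rfl⟩ := Finset.mem_image.1 hs
    exact hfd.2.1 j
  have hTS : T ⊆ S := Finset.insert_subset hu hES
  have hTc : T.card ≤ n := by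
    have h1 : T.card ≤ E.card + 1 := Finset.card_insert_le u E
    have h2 : E.card ≤ n - 1 := by
      have := Finset.card_image_le (s := (Finset.univ : Finset (Fin n)).erase i) (f := e)
      rwa [Finset.card_erase_of_mem (Finset.mem_univ _), Finset.card_univ, Fintype.card_fin] at this
    omega
  have hA := hC T hTS hTc
  set A := ∑ s ∈ T, (a s : ℝ) with hAdef
  set x : Fin n → ℝ := ∑ s ∈ T, (a s : ℝ) • s with hx
  obtain ⟨v', hv', f, g', hfd', hnn⟩ := cover n S a h0 hapos hF x
  have hv'S := (dual_iff n S v').1 hv'.1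
  have hint : ∀ j, ∃ z : ℤ, g' j ⬝ᵥ x = z := by
    intro j
    have hxz : ∀ k, ∃ z : ℤ, x k = z := by
      intro k
      have : ∀ s ∈ T, ∃ z : ℤ, (a s : ℝ) * s k = z := fun s hs =>
        integral_vert n hn S a hvert h0 hapos hF s (hTS hs) k
      choose! z hz using this
      refine ⟨∑ s ∈ T, z s, ?_⟩
      push_cast
      rw [hx, Finset.sum_apply]
      exact Finset.sum_congr rfl fun s hs => by simpa using hz s hs
    choose z hz using hxz
    choose y hy using hfd'.2.2.2.2.2.1 j
    refine ⟨∑ k, y k * z k, ?_⟩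
    push_cast
    exact Finset.sum_congr rfl fun k _ => by rw [hz, hy]
  set m : Fin n → ℝ := fun j => g' j ⬝ᵥ x with hm
  have hm1 : ∀ j, m j = 0 ∨ 1 ≤ m j := by
    intro j
    obtain ⟨z, hz⟩ := hint j
    have h1 : 0 ≤ m j := hnn j
    have h2 : m j = z := hz
    rw [h2] at h1 ⊢
    have h1 : 0 ≤ z := by exact_mod_cast h1
    rcases h1.eq_or_lt with h | h
    · left; rw [← h]; simp
    · right; exact_mod_cast h
  set D := ∑ j, m j * a (f j) with hD
  have hyx : ∀ y : Fin n → ℝ, y ⬝ᵥ x = ∑ s ∈ T, (a s : ℝ) * (y ⬝ᵥ s) := by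
    intro y
    simp only [hx, dotProduct_sum, dotProduct_smul, smul_eq_mul]
  have hDx : v' ⬝ᵥ x = - D := by
    rw [FD_coord hfd', hD, ← Finset.sum_neg_distrib]
    apply Finset.sum_congr rfl; intro j _; rw [FD_v hfd']; simp [hm]
  have hADeq : A - D = ∑ s ∈ T, (a s : ℝ) * (1 + v' ⬝ᵥ s) := by
    simp only [mul_add, mul_one, Finset.sum_add_distrib, ← hyx, hDx]; ring
  have hnn' : ∀ s ∈ T, 0 ≤ (a s : ℝ) * (1 + v' ⬝ᵥ s) := fun s hs =>
    mul_nonneg (by linarith [hap s (hTS hs)]) (by linarith [hv'S s (hTS hs)])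
  have hAD : 0 < A - D := by
    rw [hADeq]
    refine (Finset.sum_nonneg hnn').lt_of_ne fun h => ?_
    have h' := (Finset.sum_eq_zero_iff_of_nonneg hnn').1 h.symm
    have h'' : ∀ s ∈ T, v' ⬝ᵥ s = -1 := by
      intro s hs
      rcases mul_eq_zero.1 (h' s hs) with h | h
      · linarith [hap s (hTS hs)]
      · linarith
    refine hi v' hv' ⟨h'' u (Finset.mem_insert_self _ _), fun j hj => h'' _ ?_⟩
    exact Finset.mem_insert_of_mem (Finset.mem_image_of_mem _ (by simp [hj]))
  set h : (Fin n → ℝ) → ℝ := fun s => (a s : ℝ) * (1 + v ⬝ᵥ s) with hh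
  have hh0 : ∀ s ∈ S, 0 ≤ h s := fun s hs =>
    mul_nonneg (by linarith [hap s hs]) (by linarith [hvS s hs])
  have hsumT : ∑ s ∈ T, h s = h u := by
    rw [hT, Finset.sum_insert huE, Finset.sum_eq_zero, add_zero]
    intro s hs
    obtain ⟨j, _, rfl⟩ := Finset.mem_image.1 hs
    simp [hh, FD_v hfd]
  have hsumT' : ∑ s ∈ T, h s = A + v ⬝ᵥ x := by
    rw [hyx, hAdef, ← Finset.sum_add_distrib]
    apply Finset.sum_congr rfl; intros; simp only [hh]; ring
  have hsumf : ∑ j, m j * h (f j) = D + v ⬝ᵥ x := by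
    rw [FD_coord hfd', hD, ← Finset.sum_add_distrib]
    apply Finset.sum_congr rfl; intros; simp only [hh, hm]; ring
  have hterm : ∀ j, 0 ≤ m j * h (f j) := fun j => mul_nonneg (hnn j) (hh0 _ (hfd'.2.1 j))
  have hle : ∀ j, m j * h (f j) ≤ m j * a (f j) * K := by
    intro j
    rcases hm1 j with h0 | h1
    · simp [h0]
    · have hs := Finset.single_le_sum (fun j _ => hterm j) (Finset.mem_univ j)
      have h2 : h (f j) ≤ m j * h (f j) := le_mul_of_one_le_left (hh0 _ (hfd'.2.1 j)) h1
      have h3 : h (f j) ≤ K := hrec _ (hfd'.2.1 j) (by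
        change h (f j) < h u
        linarith)
      have h4 := hap _ (hfd'.2.1 j)
      rw [mul_assoc]
      apply mul_le_mul_of_nonneg_left _ (hnn j)
      nlinarith
  have hfin : ∑ j, m j * h (f j) ≤ D * K := by
    rw [hD, Finset.sum_mul]
    exact Finset.sum_le_sum fun j _ => hle j
  change h u ≤ C * K
  have : h u = A - D + ∑ j, m j * h (f j) := by linarith
  nlinarith

/-- Lemma 4.8 (lem1).  Let `Q ⊆ ℝⁿ` be a polytope with vertex set `S` containing `0`
in its interior, with positive integer weights `a s` on the vertices.  Assume that for
every extreme point `v` of `Q*` the facet `{u ∈ Q : ⟨v,u⟩ = -1}` has exactly `n`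
vertices `e₁,…,eₙ` with `(a(e₁)e₁,…,a(eₙ)eₙ)` a `ℤ`-basis of `ℤⁿ`; that
`r := #S - n ≥ 2`; and that every sum of at most `n` vertex weights is at most `C`.
Then for every vertex `u` of `Q` and every extreme point `v` of `Q*`,
`0 ≤ a(u)(1 + ⟨v,u⟩) ≤ C^r`. -/
theorem stmt3 (n : ℕ) (hn : 1 ≤ n)
    (S : Finset (Fin n → ℝ)) (Q : Set (Fin n → ℝ))
    (hQ : Q = convexHull ℝ (S : Set (Fin n → ℝ)))
    (hvert : Set.extremePoints ℝ Q = (S : Set (Fin n → ℝ)))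
    (h0 : (0 : Fin n → ℝ) ∈ interior Q)
    (a : (Fin n → ℝ) → ℤ) (hapos : ∀ s ∈ S, 0 < a s)
    (hfacet : ∀ v ∈ Set.extremePoints ℝ (dualSet n Q),
      ∃ e : Fin n → (Fin n → ℝ), Function.Injective e ∧ (∀ i, e i ∈ S) ∧
        (∀ s ∈ S, ((∑ j, v j * s j = -1) ↔ ∃ i, e i = s)) ∧
        ∃ M : Matrix (Fin n) (Fin n) ℤ,
          (∀ i j, ((M i j : ℤ) : ℝ) = (a (e i) : ℝ) * e i j) ∧ IsUnit M.det)
    (r : ℕ) (hcard : S.card = n + r) (hr : 2 ≤ r)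
    (C : ℝ) (hC : ∀ T ⊆ S, T.card ≤ n → ∑ s ∈ T, (a s : ℝ) ≤ C) :
    ∀ u ∈ S, ∀ v ∈ Set.extremePoints ℝ (dualSet n Q),
      0 ≤ (a u : ℝ) * (1 + ∑ j, v j * u j) ∧
        (a u : ℝ) * (1 + ∑ j, v j * u j) ≤ C ^ r := by
  classical
  subst hQ
  have hF : ∀ v ∈ Set.extremePoints ℝ (dualSet n (convexHull ℝ (S : Set (Fin n → ℝ)))),
      ∃ e g, FD n S a v e g := fun v hv => exists_FD n S a v (hfacet v hv)
  intro u hu v hv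
  have hap : ∀ s ∈ S, (1 : ℝ) ≤ a s := fun s hs => by exact_mod_cast hapos _ hs
  have hvS := (dual_iff n S v).1 hv.1
  have hC1 : 1 ≤ C := by
    have := hC {u} (by simpa using hu) (by simpa using hn)
    rw [Finset.sum_singleton] at this
    linarith [hap u hu]
  change 0 ≤ (a u : ℝ) * (1 + v ⬝ᵥ u) ∧ (a u : ℝ) * (1 + v ⬝ᵥ u) ≤ C ^ r
  refine ⟨mul_nonneg (by linarith [hap u hu]) (by linarith [hvS u hu]), ?_⟩
  set h : (Fin n → ℝ) → ℝ := fun s => (a s : ℝ) * (1 + v ⬝ᵥ s) with hh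
  set P := S.filter (fun s => v ⬝ᵥ s ≠ -1) with hP
  have hPc : P.card = r := by
    obtain ⟨e, g, hfd⟩ := hF v hv
    have h1 : S.filter (fun s => v ⬝ᵥ s = -1) = Finset.univ.image e := by
      ext s
      simp only [Finset.mem_filter, Finset.mem_image, Finset.mem_univ, true_and]
      constructor
      · rintro ⟨hs, h⟩; exact (hfd.2.2.1 s hs).1 h
      · rintro ⟨i, rfl⟩; exact ⟨hfd.2.1 i, FD_v hfd i⟩
    have h2 := Finset.card_filter_add_card_filter_not (s := S) (fun s => v ⬝ᵥ s = -1)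
    rw [h1, Finset.card_image_of_injective _ hfd.1, Finset.card_univ, Fintype.card_fin] at h2
    have h3 : P.card = (S.filter (fun s => ¬ v ⬝ᵥ s = -1)).card := rfl
    omega
  have main : ∀ N : ℕ, ∀ s ∈ P, (P.filter (fun t => h t < h s)).card = N → h s ≤ C ^ (N + 1) := by
    intro N
    induction N using Nat.strong_induction_on with
    | _ N ih =>
      intro s hs hN
      obtain ⟨hsS, hs1⟩ := Finset.mem_filter.1 hs
      rw [pow_succ']
      refine step n hn S a hvert h0 hapos hF r hcard hr C hC v hv s hsS hs1 (C ^ N)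
        (one_le_pow₀ hC1) ?_
      intro f hf hlt
      by_cases hvf : v ⬝ᵥ f = -1
      · rw [hvf]
        have := one_le_pow₀ hC1 (n := N)
        linarith
      · have hfP : f ∈ P := Finset.mem_filter.2 ⟨hf, hvf⟩
        have hlt' : (P.filter (fun t => h t < h f)).card < N := by
          rw [← hN]
          apply Finset.card_lt_card
          refine Finset.ssubset_iff_subset_ne.2 ⟨?_, ?_⟩
          · intro t ht
            simp only [Finset.mem_filter] at ht ⊢
            exact ⟨ht.1, ht.2.trans hlt⟩
          · intro heq
            have : f ∈ P.filter (fun t => h t < h s) := Finset.mem_filter.2 ⟨hfP, hlt⟩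
            rw [← heq] at this
            exact lt_irrefl _ (Finset.mem_filter.1 this).2
        exact (ih _ hlt' f hfP rfl).trans (pow_le_pow_right₀ hC1 hlt')
  change h u ≤ C ^ r
  by_cases hvu : v ⬝ᵥ u = -1
  · have : h u = 0 := by simp [hh, hvu]
    rw [this]; positivity
  · have huP : u ∈ P := Finset.mem_filter.2 ⟨hu, hvu⟩
    refine (main _ u huP rfl).trans (pow_le_pow_right₀ hC1 ?_)
    rw [Nat.succ_le_iff, ← hPc]
    apply Finset.card_lt_card
    refine Finset.filter_ssubset.2 ⟨u, huP, lt_irrefl _⟩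
end

section
/- Let n ≥ 1, let e₁,…,e_{n+1} ∈ ℝⁿ and let a₁,…,a_{n+1} be positive integers such that Σ_{i=1}^{n+1} a_i·e_i = 0 and such that for each i, the family (a_j·e_j)_{j≠i} is a ℤ-basis of the lattice ℤⁿ. Let Q be the convex hull of {e₁,…,e_{n+1}} (which contains 0 in its interior). Then vol(Q*) ≤ ((a₁+⋯+a_{n+1}) · max_i a_i)ⁿ. -/
/-- Proposition 4.5, simplex case `r = 1`.  Let `e₁,…,e_{n+1} ∈ ℝⁿ` and positive
integers `a₁,…,a_{n+1}` with `Σ aᵢ eᵢ = 0` such that for each `i` the family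
`(aⱼ eⱼ)_{j ≠ i}` is a `ℤ`-basis of `ℤⁿ`.  If `Q = conv{e₁,…,e_{n+1}}`, then
`vol(Q*) ≤ ((a₁ + ⋯ + a_{n+1}) · maxᵢ aᵢ)ⁿ`. -/
theorem stmt5 (n : ℕ) (hn : 1 ≤ n)
    (e : Fin (n + 1) → (Fin n → ℝ)) (a : Fin (n + 1) → ℤ)
    (hapos : ∀ i, 0 < a i)
    (hsum : ∑ i, (a i : ℝ) • e i = 0)
    (hbasis : ∀ i : Fin (n + 1), ∃ M : Matrix (Fin n) (Fin n) ℤ,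
      (∀ k j, ((M k j : ℤ) : ℝ) = (a (i.succAbove k) : ℝ) * e (i.succAbove k) j) ∧
        IsUnit M.det)
    (A : ℤ) (hA : IsGreatest (Set.range a) A) :
    MeasureTheory.volume (dualSet n (convexHull ℝ (Set.range e))) ≤
      ENNReal.ofReal (((∑ i, (a i : ℝ)) * (A : ℝ)) ^ n) := by
  obtain ⟨M, hM, hdet⟩ := hbasis 0
  set S : ℝ := ∑ i, (a i : ℝ) with hS
  have haR : ∀ i, (0 : ℝ) < a i := fun i => by exact_mod_cast hapos i
  have hS0 : 0 ≤ S := Finset.sum_nonneg fun i _ => (haR i).le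
  have hA1 : (1 : ℝ) ≤ A := by
    obtain ⟨i, hi⟩ := hA.1
    have := hapos i
    rw [hi] at this
    exact_mod_cast this
  set R : Matrix (Fin n) (Fin n) ℝ := M.map (Int.castRingHom ℝ) with hR
  have hRdet : |R.det| = 1 := by
    have h1 : R.det = ((M.det : ℤ) : ℝ) := by
      have := (Int.castRingHom ℝ).map_det M
      simpa [hR] using this.symm
    rw [h1]
    rcases Int.isUnit_iff.mp hdet with h | h <;> simp [h]
  have hLdet : LinearMap.det (Matrix.toLin' R) = R.det := LinearMap.det_toLin' R
  have hne : LinearMap.det (Matrix.toLin' R) ≠ 0 := by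
    rw [hLdet]
    intro h
    rw [h] at hRdet
    simp at hRdet
  let lo : Fin n → ℝ := fun k => -(a k.succ : ℝ)
  let hi : Fin n → ℝ := fun k => S - (a k.succ : ℝ)
  have hsub : dualSet n (convexHull ℝ (Set.range e)) ⊆
      (Matrix.toLin' R) ⁻¹' (Set.Icc lo hi) := by
    intro v hv
    have hx : ∀ i, -(a i : ℝ) ≤ (a i : ℝ) * ∑ j, v j * e i j := by
      intro i
      have h := hv (e i) (subset_convexHull ℝ _ ⟨i, rfl⟩)
      have := mul_le_mul_of_nonneg_left h (haR i).le
      linarith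
    have hx0 : ∑ i, (a i : ℝ) * ∑ j, v j * e i j = 0 := by
      have h2 : ∀ j, ∑ i, (a i : ℝ) * e i j = 0 := by
        intro j
        have := congrFun hsum j
        simpa using this
      simp_rw [Finset.mul_sum]
      rw [Finset.sum_comm]
      refine Finset.sum_eq_zero fun j _ => ?_
      have h3 : ∑ i, (a i : ℝ) * (v j * e i j) = v j * ∑ i, (a i : ℝ) * e i j := by
        rw [Finset.mul_sum]
        exact Finset.sum_congr rfl fun i _ => by ring
      rw [h3, h2, mul_zero]
    have hup : ∀ i, (a i : ℝ) * ∑ j, v j * e i j ≤ S - a i := by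
      intro i
      have h4 : (a i : ℝ) * ∑ j, v j * e i j + a i ≤
          ∑ i, ((a i : ℝ) * ∑ j, v j * e i j + a i) :=
        Finset.single_le_sum (f := fun i => (a i : ℝ) * ∑ j, v j * e i j + a i)
          (fun k _ => by have := hx k; linarith) (Finset.mem_univ i)
      rw [Finset.sum_add_distrib, hx0] at h4
      linarith
    have hval : ∀ k, (Matrix.toLin' R) v k = (a k.succ : ℝ) * ∑ j, v j * e k.succ j := by
      intro k
      rw [Matrix.toLin'_apply, Matrix.mulVec, dotProduct, Finset.mul_sum]
      refine Finset.sum_congr rfl fun j _ => ?_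
      have := hM k j
      rw [Fin.succAbove_zero] at this
      have h5 : R k j = ((M k j : ℤ) : ℝ) := rfl
      rw [h5, this]
      ring
    refine ⟨fun k => ?_, fun k => ?_⟩
    · rw [hval]; exact hx _
    · rw [hval]; exact hup _
  refine (MeasureTheory.measure_mono hsub).trans ?_
  rw [MeasureTheory.Measure.addHaar_preimage_linearMap _ hne, hLdet, abs_inv, hRdet,
    Real.volume_Icc_pi]
  have h6 : ∀ k, hi k - lo k = S := fun k => by simp [hi, lo]
  simp only [h6, Finset.prod_const, Finset.card_univ, Fintype.card_fin, inv_one,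
    ENNReal.ofReal_one, one_mul]
  rw [← ENNReal.ofReal_pow hS0]
  apply ENNReal.ofReal_le_ofReal
  exact pow_le_pow_left₀ hS0 (le_mul_of_one_le_right hS0 hA1) n
end

section
/- Let R be a finite reduced crystallographic root system with base (set of simple roots) S, set of positive roots R⁺, and integer pairings ⟨β, α̌⟩ between roots β and coroots α̌. For a subset I ⊆ S, let R_I⁺ denote the set of positive roots that are integer linear combinations of elements of I. Then for every subset I ⊆ S: Σ_{α ∈ S∖I} Σ_{β ∈ R⁺∖R_I⁺} ⟨β, α̌⟩ ≤ #(S∖I) + #(R⁺∖R_I⁺). Equivalently, setting a_α = ⟨Σ_{β ∈ R⁺∖R_I⁺} β, α̌⟩ for α ∈ S∖I, one has Σ_{α∈S∖I}(a_α − 1) ≤ #(R⁺∖R_I⁺). -/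
/-- The pairing `⟨β, α̌⟩ = 2⟨β,α⟩/⟨α,α⟩` of a vector with the coroot of `α`,
for the standard inner product on `ℝⁿ`. -/
noncomputable def corootPairing (n : ℕ) (β α : Fin n → ℝ) : ℝ :=
  2 * (∑ i, β i * α i) / (∑ i, α i * α i)

lemma cp_add (n : ℕ) (x y a : Fin n → ℝ) :
    corootPairing n (x + y) a = corootPairing n x a + corootPairing n y a := by
  simp only [corootPairing, Pi.add_apply, add_mul, Finset.sum_add_distrib]
  ring

lemma cp_smul (n : ℕ) (t : ℝ) (x a : Fin n → ℝ) :
    corootPairing n (t • x) a = t * corootPairing n x a := by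
  simp only [corootPairing, Pi.smul_apply, smul_eq_mul, mul_assoc, ← Finset.mul_sum]
  ring

lemma sq_pos' (n : ℕ) (a : Fin n → ℝ) (ha : a ≠ 0) : 0 < ∑ i, a i * a i := by
  obtain ⟨i, hi⟩ := Function.ne_iff.mp ha
  exact Finset.sum_pos' (fun j _ => mul_self_nonneg _)
    ⟨i, Finset.mem_univ _, mul_self_pos.mpr hi⟩

lemma cp_self (n : ℕ) (a : Fin n → ℝ) (ha : a ≠ 0) : corootPairing n a a = 2 := by
  have := sq_pos' n a ha
  simp only [corootPairing]
  rw [mul_div_assoc, div_self this.ne', mul_one]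

lemma cp_cs (n : ℕ) (a b : Fin n → ℝ) (ha : a ≠ 0) (hb : b ≠ 0) (h : ∀ t : ℝ, b ≠ t • a) :
    corootPairing n b a * corootPairing n a b < 4 := by
  have h1 := sq_pos' n a ha
  have h2 := sq_pos' n b hb
  have hab : ∑ i, a i * b i = ∑ i, b i * a i := by simp only [mul_comm]
  have h3 := sq_pos' n (b - ((∑ i, b i * a i) / (∑ i, a i * a i)) • a) (sub_ne_zero.mpr (h _))
  simp only [corootPairing, hab]
  have key : ∀ t : ℝ, ∑ i, (b - t • a) i * (b - t • a) i =
      (∑ i, b i * b i) - 2 * t * (∑ i, b i * a i) + t ^ 2 * (∑ i, a i * a i) := by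
    intro t
    simp only [Finset.mul_sum, ← Finset.sum_sub_distrib, ← Finset.sum_add_distrib]
    refine Finset.sum_congr rfl fun i _ => ?_
    simp only [Pi.sub_apply, Pi.smul_apply, smul_eq_mul]
    ring
  rw [key] at h3
  generalize (∑ i, a i * a i) = A at *
  generalize (∑ i, b i * b i) = B at *
  generalize (∑ i, b i * a i) = C at *
  have h4 : B - 2 * (C / A) * C + (C / A) ^ 2 * A = (A * B - C ^ 2) / A := by
    field_simp
    ring
  rw [h4] at h3
  have h5 : 0 < A * B - C ^ 2 := by
    have := mul_pos h3 h1
    rwa [div_mul_cancel₀ _ h1.ne'] at this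
  rw [div_mul_div_comm, div_lt_iff₀ (mul_pos h1 h2)]
  nlinarith

lemma cp_neg_symm (n : ℕ) (a b : Fin n → ℝ) (ha : a ≠ 0) (hb : b ≠ 0)
    (h : corootPairing n b a < 0) : corootPairing n a b < 0 := by
  have h1 := sq_pos' n a ha
  have h2 := sq_pos' n b hb
  have hab : ∑ i, a i * b i = ∑ i, b i * a i := by simp only [mul_comm]
  simp only [corootPairing, hab] at h ⊢
  rw [div_lt_iff₀ h1] at h
  rw [div_lt_iff₀ h2]
  simpa using h

lemma string_mem (n : ℕ)
    (R : Finset (Fin n → ℝ)) (hR0 : (0 : Fin n → ℝ) ∉ R)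
    (hcrys : ∀ α ∈ R, ∀ β ∈ R, ∃ m : ℤ, (m : ℝ) = corootPairing n β α)
    (hrefl : ∀ α ∈ R, ∀ β ∈ R, β - corootPairing n β α • α ∈ R)
    (a b : Fin n → ℝ) (ha : a ∈ R) (hb : b ∈ R) (h : ∀ t : ℝ, b ≠ t • a)
    (m k : ℕ) (hm : corootPairing n b a = -(m : ℝ)) (hk1 : 1 ≤ k) (hkm : k ≤ m) :
    b + (k : ℝ) • a ∈ R := by
  have ha0 : a ≠ 0 := fun h => hR0 (h ▸ ha)
  have hb0 : b ≠ 0 := fun h => hR0 (h ▸ hb)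
  have top : b + (m : ℝ) • a ∈ R := by
    have := hrefl a ha b hb
    rwa [hm, neg_smul, sub_neg_eq_add] at this
  obtain ⟨q, hq⟩ := hcrys b hb a ha
  have hcs := cp_cs n a b ha0 hb0 h
  have hm0 : (1 : ℝ) ≤ m := by exact_mod_cast hk1.trans hkm
  have hq0 := cp_neg_symm n a b ha0 hb0 (by rw [hm]; linarith)
  rw [← hq] at hq0 hcs
  rw [hm] at hcs
  have hq0' : q < 0 := by exact_mod_cast hq0
  have hcs' : -(m : ℤ) * q < 4 := by exact_mod_cast hcs
  have hm4 : m < 4 := by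
    have : (m : ℤ) < 4 := by nlinarith
    exact_mod_cast this
  by_cases hkm' : k = m
  · rw [hkm']; exact top
  have hq1 : q = -1 := by
    have : (2 : ℤ) ≤ m := by omega
    nlinarith
  have hab : b + a ∈ R := by
    have := hrefl b hb a ha
    rw [← hq, hq1] at this
    convert this using 1
    push_cast
    module
  by_cases hk : k = 1
  · subst hk; simpa using hab
  have hk2 : k = 2 := by omega
  have hm3 : m = 3 := by omega
  subst hk2 hm3
  have := hrefl a ha _ hab
  rw [cp_add, hm, cp_self n a ha0] at this
  convert this using 1
  push_cast
  module

lemma exists_dual (n : ℕ) (S : Finset (Fin n → ℝ))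
    (hli : LinearIndependent ℝ (fun x : {x : Fin n → ℝ // x ∈ S} => x.val)) :
    ∃ f : (Fin n → ℝ) → (Fin n → ℝ) →ₗ[ℝ] ℝ,
      ∀ g ∈ S, f g g = 1 ∧ ∀ a ∈ S, a ≠ g → f g a = 0 := by
  classical
  have : ∀ g : Fin n → ℝ, ∃ f : (Fin n → ℝ) →ₗ[ℝ] ℝ,
      g ∈ S → f g = 1 ∧ ∀ a ∈ S, a ≠ g → f a = 0 := by
    intro g
    by_cases hg : g ∈ S
    · obtain ⟨F, hF⟩ := LinearMap.exists_extend
        ((Finsupp.lapply (⟨g, hg⟩ : {x : Fin n → ℝ // x ∈ S}) :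
          ({x : Fin n → ℝ // x ∈ S} →₀ ℝ) →ₗ[ℝ] ℝ) ∘ₗ hli.repr)
      have key : ∀ x (hx : x ∈ S), F x = if x = g then 1 else 0 := by
        intro x hx
        have hxs : x ∈ Submodule.span ℝ
            (Set.range fun x : {x : Fin n → ℝ // x ∈ S} => x.val) :=
          Submodule.subset_span ⟨⟨x, hx⟩, rfl⟩
        have h1 := LinearMap.congr_fun hF ⟨x, hxs⟩
        have h2 := hli.repr_eq_single ⟨x, hx⟩ ⟨x, hxs⟩ rfl
        simp only [LinearMap.comp_apply, Submodule.subtype_apply, h2,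
          Finsupp.lapply_apply, Finsupp.single_apply, Subtype.mk.injEq] at h1
        exact h1
      exact ⟨F, fun _ => ⟨by rw [key g hg]; simp, fun a ha hne => by rw [key a ha]; simp [hne]⟩⟩
    · exact ⟨0, fun h => absurd h hg⟩
  choose f hf using this
  exact ⟨f, hf⟩

/-- Lemma 4.9 (lem3).  Let `R` be a finite reduced crystallographic root system
(realized in `ℝⁿ` with the standard inner product) with base `S` and positive roots
`Rpos`, and for `I ⊆ S` let `RposI` be the positive roots that are integer linear
combinations of elements of `I`.  Then
`Σ_{α ∈ S∖I} Σ_{β ∈ R⁺∖R_I⁺} ⟨β, α̌⟩ ≤ #(S∖I) + #(R⁺∖R_I⁺)`. -/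
theorem stmt7 (n : ℕ)
    (R : Finset (Fin n → ℝ)) (hR0 : (0 : Fin n → ℝ) ∉ R)
    (hred : ∀ α ∈ R, ∀ t : ℝ, t • α ∈ R → t = 1 ∨ t = -1)
    (hcrys : ∀ α ∈ R, ∀ β ∈ R, ∃ m : ℤ, (m : ℝ) = corootPairing n β α)
    (hrefl : ∀ α ∈ R, ∀ β ∈ R, β - corootPairing n β α • α ∈ R)
    (S : Finset (Fin n → ℝ)) (hSR : S ⊆ R)
    (hli : LinearIndependent ℝ (fun x : {x : Fin n → ℝ // x ∈ S} => x.val))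
    (Rpos : Finset (Fin n → ℝ))
    (hRpos : ∀ β, β ∈ Rpos ↔
      β ∈ R ∧ ∃ c : (Fin n → ℝ) → ℕ, β = ∑ α ∈ S, (c α : ℝ) • α)
    (hbase : ∀ β ∈ R, β ∈ Rpos ∨ -β ∈ Rpos)
    (I : Finset (Fin n → ℝ)) (hI : I ⊆ S)
    (RposI : Finset (Fin n → ℝ))
    (hRposI : ∀ β, β ∈ RposI ↔
      β ∈ Rpos ∧ β ∈ Submodule.span ℤ (I : Set (Fin n → ℝ))) :
    ∑ α ∈ S \ I, ∑ β ∈ Rpos \ RposI, corootPairing n β α ≤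
      ((S \ I).card : ℝ) + ((Rpos \ RposI).card : ℝ) := by
  classical
  obtain ⟨f, hf⟩ := exists_dual n S hli
  have hne : ∀ x ∈ R, x ≠ 0 := fun x hx h => hR0 (h ▸ hx)
  have hposR : ∀ x ∈ Rpos, x ∈ R := fun x hx => ((hRpos x).1 hx).1
  -- coordinates of positive roots
  have hcoord : ∀ x ∈ Rpos, (∀ g ∈ S, 0 ≤ f g x) ∧ x = ∑ g ∈ S, f g x • g := by
    intro x hx
    obtain ⟨-, c, hc⟩ := (hRpos x).1 hx
    have h1 : ∀ g ∈ S, f g x = c g := by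
      intro g hg
      rw [hc, map_sum, Finset.sum_eq_single g]
      · simp [(hf g hg).1]
      · intro b hb hbg
        simp [(hf g hg).2 b hb hbg]
      · exact fun h => absurd hg h
    refine ⟨fun g hg => by rw [h1 g hg]; positivity, ?_⟩
    conv_lhs => rw [hc]
    exact Finset.sum_congr rfl fun g hg => by rw [h1 g hg]
  have hposOf : ∀ x ∈ R, ∀ g ∈ S, 0 < f g x → x ∈ Rpos := by
    intro x hx g hg hp
    refine (hbase x hx).resolve_right fun h => ?_
    have := (hcoord _ h).1 g hg
    rw [map_neg] at this
    linarith
  have hSpos : ∀ g ∈ S, g ∈ Rpos := fun g hg =>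
    hposOf g (hSR hg) g hg (by rw [(hf g hg).1]; norm_num)
  have hIzero : ∀ x ∈ RposI, ∀ g ∈ S \ I, f g x = 0 := by
    intro x hx g hg
    rw [Finset.mem_sdiff] at hg
    have h1 := ((hRposI x).1 hx).2
    clear hx
    induction h1 using Submodule.span_induction with
    | mem y hy =>
      exact (hf g hg.1).2 y (hI hy) (fun h => hg.2 (h ▸ hy))
    | zero => simp
    | add y z _ _ h1 h2 => rw [map_add, h1, h2, add_zero]
    | smul t y _ h1 => rw [map_zsmul, h1, smul_zero]
  -- simple reflections permute the other positive roots
  have hperm : ∀ a ∈ S, ∀ x ∈ Rpos.erase a, x - corootPairing n x a • a ∈ Rpos.erase a := by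
    intro a ha x hx
    rw [Finset.mem_erase] at hx
    obtain ⟨hxa, hx⟩ := hx
    obtain ⟨h0, hs⟩ := hcoord x hx
    obtain ⟨g, hg, hga, hgp⟩ : ∃ g ∈ S, g ≠ a ∧ 0 < f g x := by
      by_contra! hcon
      have hxe : x = f a x • a := by
        conv_lhs => rw [hs]
        refine Finset.sum_eq_single a (fun b hb hba => ?_) (fun h => absurd ha h)
        rw [le_antisymm (hcon b hb hba) (h0 b hb), zero_smul]
      have := hred a (hSR ha) (f a x) (hxe ▸ hposR x hx)
      rcases this with h | h
      · rw [h, one_smul] at hxe; exact hxa hxe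
      · have := h0 a ha; linarith
    have hgx : f g (x - corootPairing n x a • a) = f g x := by
      rw [map_sub, map_smul, (hf g hg).2 a ha hga.symm, smul_zero, sub_zero]
    rw [Finset.mem_erase]
    refine ⟨fun h => ?_, hposOf _ (hrefl a (hSR ha) x (hposR x hx)) g hg (by rw [hgx]; exact hgp)⟩
    rw [h, (hf g hg).2 a ha hga.symm] at hgx
    linarith
  have hcprefl : ∀ a ∈ S, ∀ x, corootPairing n (x - corootPairing n x a • a) a
      = - corootPairing n x a := by
    intro a ha x
    rw [sub_eq_add_neg, ← neg_smul, cp_add, cp_smul, cp_self n a (hne a (hSR ha))]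
    ring
  have hrho : ∀ a ∈ S, ∑ x ∈ Rpos, corootPairing n x a = 2 := by
    intro a ha
    rw [← Finset.add_sum_erase _ _ (hSpos a ha), cp_self n a (hne a (hSR ha))]
    have : ∑ x ∈ Rpos.erase a, corootPairing n x a =
        ∑ x ∈ Rpos.erase a, - corootPairing n x a := by
      refine Finset.sum_bij' (fun x _ => x - corootPairing n x a • a)
        (fun x _ => x - corootPairing n x a • a) (hperm a ha) (hperm a ha) ?_ ?_ ?_
      · intro x _
        rw [hcprefl a ha]; module
      · intro x _
        rw [hcprefl a ha]; module
      · intro x _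
        rw [hcprefl a ha]; ring
    rw [Finset.sum_neg_distrib] at this
    linarith
  -- nonpositivity
  have hnp : ∀ a ∈ S \ I, ∀ x ∈ RposI, corootPairing n x a ≤ 0 := by
    intro a ha x hx
    by_contra! hcon
    have hfa := hIzero x hx a ha
    have haS := (Finset.mem_sdiff.1 ha).1
    have hxp := ((hRposI x).1 hx).1
    obtain ⟨h0, hs⟩ := hcoord x hxp
    obtain ⟨g, hg, hgp⟩ : ∃ g ∈ S, 0 < f g x := by
      by_contra! hc
      refine hne x (hposR x hxp) ?_
      rw [hs]
      exact Finset.sum_eq_zero fun g hg => by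
        rw [le_antisymm (hc g hg) (h0 g hg), zero_smul]
    have hga : a ≠ g := by rintro rfl; linarith
    have h1 := hposOf _ (hrefl a (hSR haS) x (hposR x hxp)) g hg (by
      rw [map_sub, map_smul, (hf g hg).2 a haS hga, smul_zero, sub_zero]; exact hgp)
    have h2 := (hcoord _ h1).1 a haS
    rw [map_sub, map_smul, (hf a haS).1, hfa, smul_eq_mul] at h2
    linarith
  have hnat : ∀ a x, ∃ m : ℕ, a ∈ S \ I → x ∈ RposI → corootPairing n x a = -(m : ℝ) := by
    intro a x
    by_cases h : a ∈ S \ I ∧ x ∈ RposI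
    · have h1 := hnp a h.1 x h.2
      obtain ⟨q, hq⟩ := hcrys a (hSR (Finset.mem_sdiff.1 h.1).1) x
        (hposR x ((hRposI x).1 h.2).1)
      rw [← hq] at h1 ⊢
      have : q ≤ 0 := by exact_mod_cast h1
      refine ⟨(-q).toNat, fun _ _ => ?_⟩
      have h3 : (((-q).toNat : ℤ) : ℝ) = ((-q : ℤ) : ℝ) := by
        rw [Int.toNat_of_nonneg (by omega)]
      push_cast at h3
      rw [h3]; ring
    · exact ⟨0, fun h1 h2 => absurd ⟨h1, h2⟩ h⟩
  choose m hm using hnat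
  have h0I : (0 : Fin n → ℝ) ∉ RposI := fun h => hR0 (hposR _ ((hRposI _).1 h).1)
  let M : (Fin n → ℝ) → (Fin n → ℝ) → ℕ := fun a x => if x = 0 then 1 else m a x
  let T := (S \ I).sigma fun a => (insert 0 RposI).sigma fun x => Finset.Icc 1 (M a x)
  have hfx : ∀ x ∈ insert 0 RposI, ∀ g ∈ S \ I, f g x = 0 := by
    intro x hx g hg
    rcases Finset.mem_insert.1 hx with rfl | hx
    · simp
    · exact hIzero x hx g hg
  have hcard : T.card ≤ (Rpos \ RposI).card := by
    refine Finset.card_le_card_of_injOn (fun p => p.2.1 + (p.2.2 : ℝ) • p.1) ?_ ?_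
    · rintro ⟨a, x, k⟩ hp
      simp only [T, Finset.mem_coe, Finset.mem_sigma, Finset.mem_Icc] at hp
      obtain ⟨ha, hx, hk1, hkm⟩ := hp
      have haS := (Finset.mem_sdiff.1 ha).1
      have hfa : f a (x + (k : ℝ) • a) = k := by
        rw [map_add, map_smul, hfx x hx a ha, (hf a haS).1]; simp
      have hk0 : (0 : ℝ) < k := by exact_mod_cast hk1
      have hR : x + (k : ℝ) • a ∈ R := by
        rcases Finset.mem_insert.1 hx with rfl | hx
        · simp only [M, if_true] at hkm
          have : k = 1 := by omega
          subst this
          simpa using hSR haS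
        · have hx0 : x ≠ 0 := fun h => h0I (h ▸ hx)
          simp only [M, if_neg hx0] at hkm
          refine string_mem n R hR0 hcrys hrefl a x (hSR haS)
            (hposR x ((hRposI x).1 hx).1) ?_ (m a x) k (hm a x ha hx) hk1 hkm
          intro t ht
          have h1 := hIzero x hx a ha
          rw [ht, map_smul, (hf a haS).1, smul_eq_mul, mul_one] at h1
          exact hx0 (by rw [ht, h1, zero_smul])
      simp only [Finset.coe_sdiff, Set.mem_diff, Finset.mem_coe]
      refine ⟨hposOf _ hR a haS (by rw [hfa]; exact hk0), fun h => ?_⟩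
      have := hIzero _ h a ha
      rw [hfa] at this
      linarith
    · rintro ⟨a, x, k⟩ hp ⟨b, y, l⟩ hq heq
      simp only [T, Finset.mem_coe, Finset.mem_sigma, Finset.mem_Icc] at hp hq
      obtain ⟨ha, hx, hk1, -⟩ := hp
      obtain ⟨hb, hy, hl1, -⟩ := hq
      have haS := (Finset.mem_sdiff.1 ha).1
      have hbS := (Finset.mem_sdiff.1 hb).1
      simp only at heq
      have hk0 : (0 : ℝ) < k := by exact_mod_cast hk1
      have h1 := congrArg (f a) heq
      rw [map_add, map_add, map_smul, map_smul, hfx x hx a ha, hfx y hy a ha, (hf a haS).1] at h1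
      have hab : b = a := by
        by_contra hne
        rw [(hf a haS).2 b hbS hne] at h1
        simp at h1
        omega
      subst hab
      rw [(hf b haS).1] at h1
      have hkl : k = l := by
        simp at h1
        exact h1
      subst hkl
      have := add_right_cancel heq
      subst this
      rfl
  have hTcard : (T.card : ℝ) = ∑ a ∈ S \ I, (1 + ∑ x ∈ RposI, (m a x : ℝ)) := by
    simp only [T, Finset.card_sigma, Nat.card_Icc, Nat.add_sub_cancel]
    push_cast
    refine Finset.sum_congr rfl fun a _ => ?_
    rw [Finset.sum_insert h0I]
    simp only [M, if_true, Nat.cast_one]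
    congr 1
    refine Finset.sum_congr rfl fun x hx => ?_
    rw [if_neg (fun h : x = 0 => h0I (h ▸ hx))]
  have hsub : RposI ⊆ Rpos := fun x hx => ((hRposI x).1 hx).1
  have hlhs : ∑ a ∈ S \ I, ∑ x ∈ Rpos \ RposI, corootPairing n x a =
      ((S \ I).card : ℝ) + T.card := by
    rw [hTcard, Finset.card_eq_sum_ones]
    push_cast
    rw [← Finset.sum_add_distrib]
    refine Finset.sum_congr rfl fun a ha => ?_
    have h1 := Finset.sum_sdiff hsub (f := fun x => corootPairing n x a)
    rw [hrho a (Finset.mem_sdiff.1 ha).1] at h1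
    have h2 : ∑ x ∈ RposI, corootPairing n x a = - ∑ x ∈ RposI, (m a x : ℝ) := by
      rw [← Finset.sum_neg_distrib]
      exact Finset.sum_congr rfl fun x hx => hm a x ha hx
    linarith
  rw [hlhs]
  have : (T.card : ℝ) ≤ ((Rpos \ RposI).card : ℝ) := by exact_mod_cast hcard
  linarith
end

section
/- Let n be a natural number, I a nonempty finite index set, m : I → ℝ with m_i > 0 for all i ∈ I, V a finite set, and f : I × V → ℤ a function such that: (i) f(i,u) ≥ −1 for all i ∈ I and u ∈ V; (ii) Σ_{i∈I} m_i·f(i,u) = 0 for every u ∈ V; (iii) for every i ∈ I, the number of u ∈ V with f(i,u) = −1 is at most n, and the number of u ∈ V with f(i,u) = 0 is at most n. Then #V ≤ 3n. -/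
/-- The averaging lemma from Step 2 of the proof of Theorem 4.10.  Let `I` be a
nonempty finite index set, `m : I → ℝ` positive, `V` a finite set and
`f : I × V → ℤ` with: `f(i,u) ≥ -1` always; `Σᵢ mᵢ f(i,u) = 0` for every `u`; and
for every `i` at most `n` elements `u` with `f(i,u) = -1` and at most `n` with
`f(i,u) = 0`.  Then `#V ≤ 3n`. -/
theorem stmt8 {ι υ : Type*} (n : ℕ)
    (I : Finset ι) (hI : I.Nonempty)
    (m : ι → ℝ) (hm : ∀ i ∈ I, 0 < m i)
    (V : Finset υ) (f : ι → υ → ℤ)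
    (h1 : ∀ i ∈ I, ∀ u ∈ V, -1 ≤ f i u)
    (h2 : ∀ u ∈ V, ∑ i ∈ I, m i * (f i u : ℝ) = 0)
    (h3 : ∀ i ∈ I, (V.filter fun u => f i u = -1).card ≤ n ∧
      (V.filter fun u => f i u = 0).card ≤ n) :
    V.card ≤ 3 * n := by
  have key : ∀ i ∈ I, (V.card : ℤ) - 3 * n ≤ ∑ u ∈ V, f i u := by
    intro i hi
    obtain ⟨ha, hb⟩ := h3 i hi
    have h : ∑ u ∈ V, ((1 : ℤ) - 2 * (if f i u = -1 then 1 else 0)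
        - (if f i u = 0 then 1 else 0)) ≤ ∑ u ∈ V, f i u := by
      apply Finset.sum_le_sum
      intro u hu
      have := h1 i hi u hu
      split_ifs <;> omega
    rw [Finset.sum_sub_distrib, Finset.sum_sub_distrib, ← Finset.mul_sum,
      Finset.sum_boole, Finset.sum_boole] at h
    simp only [Finset.sum_const, nsmul_eq_mul, mul_one] at h
    push_cast at h
    omega
  by_contra hc
  have hpos : ∀ i ∈ I, 0 < m i * ∑ u ∈ V, (f i u : ℝ) := by
    intro i hi
    have h := key i hi
    have h' : 0 < ∑ u ∈ V, f i u := by omega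
    have h'' : (0 : ℝ) < ∑ u ∈ V, (f i u : ℝ) := by exact_mod_cast h'
    exact mul_pos (hm i hi) h''
  have hs := Finset.sum_pos hpos hI
  simp only [Finset.mul_sum] at hs
  rw [Finset.sum_comm, Finset.sum_eq_zero h2] at hs
  exact lt_irrefl _ hs
end

section
/- Let n ≥ 1 and let Q ⊆ ℝⁿ be a polytope containing 0 in its interior such that every proper face of Q is a simplex, and such that every extreme point of the dual polytope Q* lies in the lattice ℤⁿ. Then the number of vertices of Q that belong to ℤⁿ is at most 3n. -/
open Matrix in
lemma aux_mem_dual {n : ℕ} {S : Finset (Fin n → ℝ)} {Q : Set (Fin n → ℝ)}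
    (hQ : Q = convexHull ℝ (S : Set (Fin n → ℝ))) {v : Fin n → ℝ}
    (h : ∀ s ∈ S, -1 ≤ v ⬝ᵥ s) : v ∈ dualSet n Q := by
  intro u hu
  have hc : Convex ℝ {x : Fin n → ℝ | -1 ≤ v ⬝ᵥ x} := by
    intro x hx y hy a b ha hb hab
    simp only [Set.mem_ofPred_eq, dotProduct_add, dotProduct_smul, smul_eq_mul] at *
    nlinarith
  have : convexHull ℝ (S : Set (Fin n → ℝ)) ⊆ {x : Fin n → ℝ | -1 ≤ v ⬝ᵥ x} :=
    convexHull_min (fun s hs => h s hs) hc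
  exact this (hQ ▸ hu)

open Matrix in
lemma aux_eps {n : ℕ} {S : Finset (Fin n → ℝ)} {Q : Set (Fin n → ℝ)}
    (hQ : Q = convexHull ℝ (S : Set (Fin n → ℝ))) {v w : Fin n → ℝ}
    (hv : v ∈ dualSet n Q) (hw : ∀ s ∈ S, v ⬝ᵥ s = -1 → 0 ≤ w ⬝ᵥ s) :
    ∃ ε : ℝ, 0 < ε ∧ v + ε • w ∈ dualSet n Q := by
  have h : ∀ᶠ ε : ℝ in nhdsWithin 0 (Set.Ioi 0), ∀ s ∈ S, -1 ≤ (v + ε • w) ⬝ᵥ s := by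
    rw [Filter.eventually_all_finset]
    intro s hs
    have hvs : -1 ≤ v ⬝ᵥ s := hv s (hQ ▸ subset_convexHull ℝ _ hs)
    by_cases h1 : v ⬝ᵥ s = -1
    · filter_upwards [self_mem_nhdsWithin] with ε hε
      have := mul_nonneg (le_of_lt hε) (hw s hs h1)
      simp only [add_dotProduct, smul_dotProduct, smul_eq_mul]
      linarith
    · have hlt : -1 < v ⬝ᵥ s := lt_of_le_of_ne hvs (Ne.symm h1)
      have hcont : Continuous fun ε : ℝ => v ⬝ᵥ s + ε * (w ⬝ᵥ s) := by fun_prop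
      have : ∀ᶠ ε : ℝ in nhds 0, -1 < v ⬝ᵥ s + ε * (w ⬝ᵥ s) :=
        hcont.continuousAt.eventually_const_lt (by simpa using hlt)
      filter_upwards [nhdsWithin_le_nhds this] with ε hε
      simp only [add_dotProduct, smul_dotProduct, smul_eq_mul]
      exact hε.le
  obtain ⟨ε, h1, h2⟩ := (h.and self_mem_nhdsWithin).exists
  exact ⟨ε, h2, aux_mem_dual hQ h1⟩

open Matrix in
lemma aux_ext {n : ℕ} {S : Finset (Fin n → ℝ)} {Q : Set (Fin n → ℝ)}
    (hQ : Q = convexHull ℝ (S : Set (Fin n → ℝ))) {v w : Fin n → ℝ}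
    (hv : v ∈ Set.extremePoints ℝ (dualSet n Q))
    (hw : ∀ s ∈ S, v ⬝ᵥ s = -1 → w ⬝ᵥ s = 0) : w = 0 := by
  obtain ⟨a, ha, h1⟩ := aux_eps hQ hv.1 (w := w) (fun s hs h => (hw s hs h).ge)
  obtain ⟨b, hb, h2⟩ := aux_eps hQ hv.1 (w := -w) (fun s hs h => by simp [hw s hs h])
  have hab : 0 < a + b := by positivity
  have := hv.2 h1 h2 ⟨b / (a + b), a / (a + b), by positivity, by positivity,
    by field_simp; ring, by
      ext i
      simp only [Pi.add_apply, Pi.smul_apply, Pi.neg_apply, smul_eq_mul]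
      field_simp; ring⟩
  have h3 : a • w = 0 := by simpa using this
  exact (smul_eq_zero.1 h3).resolve_left ha.ne'

lemma aux_compact {n : ℕ} {Q : Set (Fin n → ℝ)}
    (h0 : (0 : Fin n → ℝ) ∈ interior Q) : IsCompact (dualSet n Q) := by
  rw [Metric.isCompact_iff_isClosed_bounded]
  constructor
  · have : dualSet n Q = ⋂ u ∈ Q, {v : Fin n → ℝ | -1 ≤ ∑ i, v i * u i} := by
      ext v; simp [dualSet]
    rw [this]
    refine isClosed_biInter fun u _ => isClosed_le (by fun_prop) (by fun_prop)
  · obtain ⟨r, hr, hball⟩ := Metric.nhds_basis_closedBall.mem_iff.1 (mem_interior_iff_mem_nhds.1 h0)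
    rw [isBounded_iff_forall_norm_le]
    refine ⟨1 / r, fun v hv => ?_⟩
    rw [pi_norm_le_iff_of_nonneg (by positivity)]
    intro i
    have key : ∀ c : ℝ, |c| ≤ r → -1 ≤ v i * c := by
      intro c hc
      have := hv (Pi.single i c) (hball (by rw [mem_closedBall_zero_iff, Pi.norm_single]; exact hc))
      simpa [Pi.single_apply] using this
    have k1 := key r (by rw [abs_of_pos hr])
    have k2 := key (-r) (by rw [abs_neg, abs_of_pos hr])
    rw [Real.norm_eq_abs, abs_le, le_div_iff₀ hr]
    refine ⟨?_, by linarith⟩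
    rw [neg_le_iff_add_nonneg, ← sub_nonneg]
    have : 0 ≤ (v i * r + 1) / r := div_nonneg (by linarith) hr.le
    have e : (v i * r + 1) / r = v i + 1 / r := by field_simp
    linarith

lemma aux_convex {n : ℕ} {Q : Set (Fin n → ℝ)} : Convex ℝ (dualSet n Q) := by
  intro x hx y hy a b ha hb hab u hu
  have h1 := hx u hu
  have h2 := hy u hu
  have : ∑ i, (a • x + b • y) i * u i = a * ∑ i, x i * u i + b * ∑ i, y i * u i := by
    simp only [Pi.add_apply, Pi.smul_apply, smul_eq_mul, Finset.mul_sum, ← Finset.sum_add_distrib]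
    exact Finset.sum_congr rfl fun i _ => by ring
  rw [this]; nlinarith

lemma aux_finite {n : ℕ} {K : Set (Fin n → ℝ)} (hK : Bornology.IsBounded K)
    (hl : ∀ v ∈ K, IsLatticePoint v) : K.Finite := by
  obtain ⟨C, hC⟩ := isBounded_iff_forall_norm_le.1 hK
  have hf : (Set.pi Set.univ (fun _ : Fin n => (fun m : ℤ => (m : ℝ)) '' Set.Icc (-⌈C⌉) ⌈C⌉)).Finite :=
    Set.Finite.pi fun _ => (Set.finite_Icc _ _).image _
  refine hf.subset fun v hv i _ => ?_
  obtain ⟨m, hm⟩ := hl v hv i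
  refine ⟨m, ?_, hm.symm⟩
  have h1 : |v i| ≤ C := (norm_le_pi_norm v i).trans (hC v hv)
  rw [hm, abs_le] at h1
  have h2 := Int.le_ceil C
  constructor
  · have : ((-⌈C⌉ : ℤ) : ℝ) ≤ m := by push_cast; linarith
    exact_mod_cast this
  · have : (m : ℝ) ≤ (⌈C⌉ : ℤ) := by linarith
    exact_mod_cast this

/-- vertices on the facet dual to `v` -/
def facetVerts (n : ℕ) (Q : Set (Fin n → ℝ)) (v : Fin n → ℝ) : Set (Fin n → ℝ) :=
  {u | u ∈ Set.extremePoints ℝ Q ∧ ∑ i, v i * u i = -1}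

set_option maxHeartbeats 1000000 in
open Matrix in
lemma aux_basis (n : ℕ) (hn : 1 ≤ n)
    (S : Finset (Fin n → ℝ)) (Q : Set (Fin n → ℝ))
    (hQ : Q = convexHull ℝ (S : Set (Fin n → ℝ)))
    (hsimp : ∀ v : Fin n → ℝ, v ≠ 0 → ∀ c : ℝ, (∀ u ∈ Q, ∑ i, v i * u i ≤ c) →
      ∃ T : Finset (Fin n → ℝ),
        AffineIndependent ℝ (fun t : {t : Fin n → ℝ // t ∈ T} => t.val) ∧
        {u ∈ Q | ∑ i, v i * u i = c} = convexHull ℝ (T : Set (Fin n → ℝ)))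
    {v : Fin n → ℝ} (hv : v ∈ Set.extremePoints ℝ (dualSet n Q)) :
    (∃ b : Module.Basis (facetVerts n Q v) ℝ (Fin n → ℝ), ∀ e, b e = e) ∧
      ∀ s ∈ S, v ⬝ᵥ s = -1 → s ∈ closure (convexHull ℝ (facetVerts n Q v)) := by
  have hv0 : v ≠ 0 := by
    rintro rfl
    have := aux_ext hQ hv (w := fun _ => 1) (fun s hs h => by simp at h)
    have := congrFun this ⟨0, hn⟩
    simp at this
  obtain ⟨T, hT, hF⟩ := hsimp (-v) (neg_ne_zero.2 hv0) 1 (fun u hu => by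
    have := hv.1 u hu
    simp only [Pi.neg_apply, neg_mul, Finset.sum_neg_distrib]
    linarith)
  set F := {u ∈ Q | ∑ i, (-v) i * u i = 1} with hFdef
  have hFmem : ∀ u, u ∈ F ↔ u ∈ Q ∧ v ⬝ᵥ u = -1 := by
    intro u
    simp only [hFdef, Set.mem_ofPred_eq, Pi.neg_apply, neg_mul, Finset.sum_neg_distrib, dotProduct]
    refine and_congr_right fun _ => ⟨fun h => by linarith, fun h => by linarith⟩
  have hFext : IsExtreme ℝ Q F := by
    refine ⟨fun u hu => hu.1, ?_⟩
    rintro x hx y hy z hz ⟨a, b, ha, hb, hab, rfl⟩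
    rw [hFmem] at hz ⊢
    refine ⟨hx, ?_⟩
    have h1 : -1 ≤ v ⬝ᵥ x := hv.1 x hx
    have h2 : -1 ≤ v ⬝ᵥ y := hv.1 y hy
    have h3 := hz.2
    simp only [dotProduct_add, dotProduct_smul, smul_eq_mul] at h3
    nlinarith
  have hEF : F.extremePoints ℝ = facetVerts n Q v := by
    rw [hFext.extremePoints_eq]
    ext u
    simp only [Set.mem_inter_iff, hFmem, facetVerts, Set.mem_ofPred_eq, dotProduct]
    exact ⟨fun h => ⟨h.2, h.1.2⟩, fun h => ⟨⟨h.1.1, h.2⟩, h.1⟩⟩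
  have hET : facetVerts n Q v ⊆ T := by
    rw [← hEF, hF]; exact extremePoints_convexHull_subset
  have hTv : ∀ t ∈ T, v ⬝ᵥ t = -1 := fun t ht =>
    ((hFmem t).1 (hF ▸ subset_convexHull ℝ _ ht)).2
  have hTli : LinearIndependent ℝ (fun t : {t : Fin n → ℝ // t ∈ T} => t.val) := by
    rw [linearIndependent_iff']
    intro s g hg
    refine affineIndependent_iff.1 hT s g ?_ hg
    have := congrArg (fun x => v ⬝ᵥ x) hg
    simp only [dotProduct_sum, dotProduct_smul, smul_eq_mul, dotProduct_zero] at this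
    rw [Finset.sum_congr rfl (fun x _ => by rw [hTv x.1 x.2])] at this
    simpa using this
  have hli : LinearIndependent ℝ (fun e : facetVerts n Q v => e.val) :=
    hTli.comp (fun e : facetVerts n Q v => (⟨e.1, hET e.2⟩ : {t : Fin n → ℝ // t ∈ T}))
      (fun a b h => Subtype.ext (Subtype.mk.inj h))
  have hclos : ∀ s ∈ S, v ⬝ᵥ s = -1 → s ∈ closure (convexHull ℝ (facetVerts n Q v)) := by
    intro s hs h
    have hsF : s ∈ F := (hFmem s).2 ⟨hQ ▸ subset_convexHull ℝ _ hs, h⟩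
    have hcomp : IsCompact F := by
      rw [hF]; exact T.finite_toSet.isCompact_convexHull ℝ
    have hconv : Convex ℝ F := by rw [hF]; exact convex_convexHull _ _
    rwa [← closure_convexHull_extremePoints hcomp hconv, hEF] at hsF
  have hspan : ⊤ ≤ Submodule.span ℝ (Set.range (fun e : facetVerts n Q v => e.val)) := by
    by_contra hcon
    obtain ⟨f, hf0, hf⟩ := Submodule.exists_le_ker_of_lt_top _ (lt_top_iff_ne_top.2 (fun h => hcon h.ge))
    have hfw : ∀ x, f x = (fun i => f (Pi.single i 1)) ⬝ᵥ x := by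
      intro x
      conv_lhs => rw [pi_eq_sum_univ' x]
      simp [dotProduct, mul_comm]
    apply hf0
    have hw0 : (fun i => f (Pi.single i 1)) = 0 := by
      apply aux_ext hQ hv
      intro s hs h
      rw [← hfw]
      have hsub : closure (convexHull ℝ (facetVerts n Q v)) ⊆ (LinearMap.ker f : Set (Fin n → ℝ)) := by
        refine closure_minimal (convexHull_min ?_ (Submodule.convex _)) (Submodule.closed_of_finiteDimensional _)
        intro e he
        exact hf (Submodule.subset_span ⟨⟨e, he⟩, rfl⟩)
      exact hsub (hclos s hs h)
    ext i
    simpa using congrFun hw0 i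
  exact ⟨⟨Module.Basis.mk hli hspan, fun e => Module.Basis.mk_apply hli hspan e⟩, hclos⟩

lemma aux_int {n : ℕ} {u v : Fin n → ℝ} (hu : IsLatticePoint u) (hv : IsLatticePoint v) :
    ∃ m : ℤ, ∑ i, v i * u i = m := by
  choose a ha using hu
  choose b hb using hv
  exact ⟨∑ i, b i * a i, by push_cast; exact Finset.sum_congr rfl fun i _ => by rw [ha, hb]⟩

lemma aux_card {n : ℕ} {A : Set (Fin n → ℝ)} (b : Module.Basis A ℝ (Fin n → ℝ)) :
    A.Finite ∧ A.ncard = n := by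
  have : Finite A := Module.Finite.finite_basis b
  refine ⟨Set.toFinite A, ?_⟩
  rw [← Nat.card_coe_set_eq, ← Module.finrank_eq_nat_card_basis b, Module.finrank_fin_fun]

open Matrix in
lemma aux_edge {n : ℕ} {S : Finset (Fin n → ℝ)} {Q : Set (Fin n → ℝ)}
    (hQ : Q = convexHull ℝ (S : Set (Fin n → ℝ))) (h0 : (0 : Fin n → ℝ) ∈ interior Q)
    {v : Fin n → ℝ} (hv : v ∈ Set.extremePoints ℝ (dualSet n Q))
    (hclos : ∀ s ∈ S, v ⬝ᵥ s = -1 → s ∈ closure (convexHull ℝ (facetVerts n Q v)))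
    (b : Module.Basis (facetVerts n Q v) ℝ (Fin n → ℝ)) (hb : ∀ e, b e = e)
    (e : facetVerts n Q v) :
    ∃ v' ∈ Set.extremePoints ℝ (dualSet n Q), ∃ t : ℝ, 0 < t ∧
      ∀ x, v' ⬝ᵥ x = v ⬝ᵥ x + t * b.coord e x := by
  classical
  set w : Fin n → ℝ := fun i => b.coord e (Pi.single i 1) with hwdef
  have hw : ∀ x, w ⬝ᵥ x = b.coord e x := by
    intro x
    conv_rhs => rw [pi_eq_sum_univ' x]
    simp [dotProduct, mul_comm, hwdef]
  have hwe : w ⬝ᵥ e.1 = 1 := by rw [hw, ← hb e]; simp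
  have hwne : ∀ e', e' ≠ e → w ⬝ᵥ e'.1 = 0 := by
    intro e' h; rw [hw, ← hb e']; simp [h]
  have hw0 : w ≠ 0 := by rintro h; rw [h] at hwe; simp at hwe
  have hsub : closure (convexHull ℝ (facetVerts n Q v)) ⊆ {x | 0 ≤ w ⬝ᵥ x} := by
    refine closure_minimal (convexHull_min ?_ ?_)
      (isClosed_le continuous_const (by unfold dotProduct; fun_prop))
    · intro x hx
      by_cases h : (⟨x, hx⟩ : facetVerts n Q v) = e
      · have : x = e.1 := congrArg Subtype.val h
        rw [Set.mem_ofPred_eq, this, hwe]; norm_num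
      · exact (hwne _ h).ge
    · intro x hx y hy a b ha hb hab
      simp only [Set.mem_ofPred_eq, dotProduct_add, dotProduct_smul, smul_eq_mul] at *
      positivity
  obtain ⟨ε, hε, hεm⟩ := aux_eps hQ hv.1 (w := w) (fun s hs h => hsub (hclos s hs h))
  -- maximal parameter
  have hcomp : IsCompact {t : ℝ | v + t • w ∈ dualSet n Q} := by
    have hemb : Topology.IsClosedEmbedding (fun t : ℝ => v + t • w) :=
      (Homeomorph.addLeft v).isClosedEmbedding.comp (isClosedEmbedding_smul_left hw0)
    exact hemb.isCompact_preimage (aux_compact h0)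
  obtain ⟨t, ht, hmax⟩ := hcomp.exists_isGreatest ⟨ε, hεm⟩
  have htpos : 0 < t := hε.trans_le (hmax hεm)
  refine ⟨v + t • w, ⟨ht, ?_⟩, t, htpos, fun x => by simp [add_dotProduct, hw]⟩
  rintro x hx y hy ⟨p, q, hp, hq, hpq, hxy⟩
  have tight : ∀ e', e' ≠ e → x ⬝ᵥ e'.1 = -1 ∧ y ⬝ᵥ e'.1 = -1 := by
    intro e' he'
    have h1 : -1 ≤ x ⬝ᵥ e'.1 := hx _ e'.2.1.1
    have h2 : -1 ≤ y ⬝ᵥ e'.1 := hy _ e'.2.1.1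
    have h3 := congrArg (fun z => z ⬝ᵥ e'.1) hxy
    simp only [add_dotProduct, smul_dotProduct, smul_eq_mul, hwne e' he'] at h3
    have h4 : v ⬝ᵥ e'.1 = -1 := e'.2.2
    rw [h4] at h3
    constructor <;> nlinarith
  have line : ∀ z : Fin n → ℝ, (∀ e', e' ≠ e → z ⬝ᵥ e'.1 = -1) →
      z = v + (z ⬝ᵥ e.1 + 1) • w := by
    intro z hz
    have hlin : ∀ x, z ⬝ᵥ x = (v + (z ⬝ᵥ e.1 + 1) • w) ⬝ᵥ x := by
      have : dotProductBilin ℝ ℝ z = dotProductBilin ℝ ℝ (v + (z ⬝ᵥ e.1 + 1) • w) := by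
        apply b.ext
        intro e'
        rw [hb]
        have h4 : v ⬝ᵥ e'.1 = -1 := e'.2.2
        by_cases h : e' = e
        · subst h
          simp [add_dotProduct, h4, hwe]
        · simp [add_dotProduct, h4, hwne e' h, hz e' h]
      intro x
      exact LinearMap.congr_fun this x
    ext i
    simpa using hlin (Pi.single i 1)
  have lx := line x (fun e' h => (tight e' h).1)
  have ly := line y (fun e' h => (tight e' h).2)
  set a := x ⬝ᵥ e.1 + 1 with ha
  set c := y ⬝ᵥ e.1 + 1 with hc
  have hat : a ≤ t := hmax (show v + a • w ∈ _ by rw [← lx]; exact hx)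
  have hct : c ≤ t := hmax (show v + c • w ∈ _ by rw [← ly]; exact hy)
  have h5 := congrArg (fun z => z ⬝ᵥ e.1) hxy
  have h4 : v ⬝ᵥ e.1 = -1 := e.2.2
  simp only [add_dotProduct, smul_dotProduct, smul_eq_mul, hwe, h4] at h5
  have h6 : p * a + q * c = t := by rw [ha, hc]; linear_combination h5 + hpq
  have : a = t := by nlinarith
  rw [lx, this]

open Matrix in
lemma aux_zero (n : ℕ) (hn : 1 ≤ n)
    (S : Finset (Fin n → ℝ)) (Q : Set (Fin n → ℝ))
    (hQ : Q = convexHull ℝ (S : Set (Fin n → ℝ)))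
    (h0 : (0 : Fin n → ℝ) ∈ interior Q)
    (hsimp : ∀ v : Fin n → ℝ, v ≠ 0 → ∀ c : ℝ, (∀ u ∈ Q, ∑ i, v i * u i ≤ c) →
      ∃ T : Finset (Fin n → ℝ),
        AffineIndependent ℝ (fun t : {t : Fin n → ℝ // t ∈ T} => t.val) ∧
        {u ∈ Q | ∑ i, v i * u i = c} = convexHull ℝ (T : Set (Fin n → ℝ)))
    (hdual : ∀ v ∈ Set.extremePoints ℝ (dualSet n Q), IsLatticePoint v)
    {v : Fin n → ℝ} (hv : v ∈ Set.extremePoints ℝ (dualSet n Q)) :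
    {u | (u ∈ Set.extremePoints ℝ Q ∧ IsLatticePoint u) ∧ v ⬝ᵥ u = 0}.ncard ≤ n := by
  classical
  obtain ⟨⟨b, hb⟩, hclos⟩ := aux_basis n hn S Q hQ hsimp hv
  obtain ⟨hfin, hcard⟩ := aux_card b
  have : Fintype (facetVerts n Q v) := hfin.fintype
  have hneg : ∀ u, (u ∈ Set.extremePoints ℝ Q ∧ IsLatticePoint u) ∧ v ⬝ᵥ u = 0 →
      ∃ e : facetVerts n Q v, b.coord e u < 0 := by
    rintro u ⟨⟨hu, -⟩, huv⟩
    by_contra! hcon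
    have hsum := b.sum_repr u
    have h1 := congrArg (fun x => v ⬝ᵥ x) hsum
    simp only [dotProduct_sum, dotProduct_smul, smul_eq_mul, huv] at h1
    rw [Finset.sum_congr rfl (fun e _ => by
      rw [hb e, show v ⬝ᵥ (e : Fin n → ℝ) = -1 from e.2.2])] at h1
    have h2 : ∑ e, b.repr u e = 0 := by
      simpa using h1
    rw [Finset.sum_eq_zero_iff_of_nonneg (fun e _ => by simpa using hcon e)] at h2
    have hu0 : u = 0 := by
      rw [← hsum]
      exact Finset.sum_eq_zero fun e he => by rw [h2 e he, zero_smul]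
    -- `0` is interior, hence not extreme
    subst hu0
    obtain ⟨r, hr, hball⟩ :=
      Metric.nhds_basis_closedBall.mem_iff.1 (mem_interior_iff_mem_nhds.1 h0)
    have k : ∀ c : ℝ, |c| ≤ r → (Pi.single ⟨0, hn⟩ c : Fin n → ℝ) ∈ Q := fun c hc =>
      hball (by rw [mem_closedBall_zero_iff, Pi.norm_single]; exact hc)
    have := hu.2 (k r (abs_of_pos hr).le) (k (-r) (by rw [abs_neg, abs_of_pos hr]))
      ⟨1 / 2, 1 / 2, by norm_num, by norm_num, by norm_num, by
        rw [← Pi.single_smul, ← Pi.single_smul, ← Pi.single_add]; simp⟩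
    have := congrFun this ⟨0, hn⟩
    simp at this
    exact hr.ne' this
  have hne0 : Nonempty (facetVerts n Q v) := by
    rw [Set.nonempty_coe_sort, ← Set.ncard_pos hfin]; omega
  choose! f hf using hneg
  refine le_trans ?_ hcard.le
  refine Set.ncard_le_ncard_of_injOn (fun u => (f u : Fin n → ℝ)) (fun u _ => (f u).2) ?_ hfin
  intro u hu u' hu' huu
  have hfu : f u = f u' := Subtype.ext huu
  obtain ⟨v', hv', t, ht, hvt⟩ := aux_edge hQ h0 hv hclos b hb (f u)
  obtain ⟨⟨b', -⟩, -⟩ := aux_basis n hn S Q hQ hsimp hv'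
  obtain ⟨hfin', hcard'⟩ := aux_card b'
  have hmem : ∀ x, (x ∈ Set.extremePoints ℝ Q ∧ IsLatticePoint x) ∧ v ⬝ᵥ x = 0 →
      b.coord (f u) x < 0 → x ∈ facetVerts n Q v' := by
    rintro x ⟨⟨hx, hxl⟩, hx0⟩ hlt
    refine ⟨hx, ?_⟩
    obtain ⟨m, hm⟩ := aux_int hxl (hdual v' hv')
    have h1 : -1 ≤ ∑ i, v' i * x i := hv'.1 x hx.1
    have h2 : ∑ i, v' i * x i < 0 := by
      have := hvt x
      rw [hx0] at this
      have h3 := mul_neg_of_pos_of_neg ht hlt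
      change v' ⬝ᵥ x < 0
      linarith
    rw [hm] at h1 h2 ⊢
    have h3 : -1 ≤ m := by exact_mod_cast h1
    have h4 : m < 0 := by exact_mod_cast h2
    have : m = -1 := by omega
    rw [this]; norm_num
  have m1 := hmem u hu (hf u hu)
  have m2 := hmem u' hu' (hfu ▸ hf u' hu')
  by_contra hne
  have hnot : ∀ x, v ⬝ᵥ x = 0 → x ∉ facetVerts n Q v := by
    intro x hx hx'
    have : v ⬝ᵥ x = -1 := hx'.2
    rw [hx] at this; norm_num at this
  have hsub : insert u (insert u' (facetVerts n Q v \ {(f u : Fin n → ℝ)})) ⊆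
      facetVerts n Q v' := by
    rintro x (rfl | rfl | ⟨hx, hxe⟩)
    · exact m1
    · exact m2
    · refine ⟨hx.1, ?_⟩
      have h1 := hvt x
      have h2 : b.coord (f u) x = 0 := by
        have : x = b ⟨x, hx⟩ := (hb ⟨x, hx⟩).symm
        rw [this]
        have hne : (⟨x, hx⟩ : facetVerts n Q v) ≠ f u := fun h => hxe (congrArg Subtype.val h)
        simp [hne]
      rw [h2, mul_zero, add_zero] at h1
      exact h1.trans hx.2
  have hle := Set.ncard_le_ncard hsub hfin'
  rw [Set.ncard_insert_of_notMem (by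
      rintro (h | h)
      · exact hne h
      · exact hnot u hu.2 h.1) ((hfin.subset Set.diff_subset).insert _),
    Set.ncard_insert_of_notMem (fun h => hnot u' hu'.2 h.1) (hfin.subset Set.diff_subset),
    Set.ncard_diff_singleton_of_mem (f u).2] at hle
  omega

/-- Combinatorial core of Theorem 4.10.  Let `Q ⊆ ℝⁿ` be a polytope containing `0`
in its interior such that every proper face of `Q` (the intersection of `Q` with a
supporting hyperplane) is a simplex, and such that every extreme point of the dual
polytope `Q*` lies in `ℤⁿ`.  Then `Q` has at most `3n` vertices belonging to `ℤⁿ`. -/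
theorem stmt9 (n : ℕ) (hn : 1 ≤ n)
    (S : Finset (Fin n → ℝ)) (Q : Set (Fin n → ℝ))
    (hQ : Q = convexHull ℝ (S : Set (Fin n → ℝ)))
    (h0 : (0 : Fin n → ℝ) ∈ interior Q)
    (hsimp : ∀ v : Fin n → ℝ, v ≠ 0 → ∀ c : ℝ, (∀ u ∈ Q, ∑ i, v i * u i ≤ c) →
      ∃ T : Finset (Fin n → ℝ),
        AffineIndependent ℝ (fun t : {t : Fin n → ℝ // t ∈ T} => t.val) ∧
        {u ∈ Q | ∑ i, v i * u i = c} = convexHull ℝ (T : Set (Fin n → ℝ)))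
    (hdual : ∀ v ∈ Set.extremePoints ℝ (dualSet n Q), IsLatticePoint v) :
    Set.ncard {u ∈ Set.extremePoints ℝ Q | IsLatticePoint u} ≤ 3 * n := by
  classical
  have hcomp : IsCompact (dualSet n Q) := aux_compact h0
  have hEfin : (Set.extremePoints ℝ (dualSet n Q)).Finite :=
    aux_finite (hcomp.isBounded.subset extremePoints_subset) hdual
  have hz : (0 : Fin n → ℝ) ∈ dualSet n Q := by intro u _; simp
  rw [← closure_convexHull_extremePoints hcomp aux_convex,
    (hEfin.isClosed_convexHull ℝ).closure_eq, ← hEfin.coe_toFinset, Finset.mem_convexHull'] at hz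
  obtain ⟨a, ha0, ha1, haz⟩ := hz
  have hUfin : {u ∈ Set.extremePoints ℝ Q | IsLatticePoint u}.Finite :=
    S.finite_toSet.subset fun u hu => by
      have := hu.1
      rw [hQ] at this
      exact extremePoints_convexHull_subset this
  rw [Set.ncard_eq_toFinset_card _ hUfin]
  set U := hUfin.toFinset with hU
  set E := hEfin.toFinset with hE
  have hUm : ∀ u ∈ U, u ∈ Set.extremePoints ℝ Q ∧ IsLatticePoint u := fun u hu =>
    hUfin.mem_toFinset.1 hu
  have hEm : ∀ v ∈ E, v ∈ Set.extremePoints ℝ (dualSet n Q) := fun v hv =>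
    hEfin.mem_toFinset.1 hv
  let g : (Fin n → ℝ) → (Fin n → ℝ) → ℝ := fun v u =>
    2 * (if ∑ i, v i * u i = -1 then 1 else 0) + (if ∑ i, v i * u i = 0 then 1 else 0)
  have hg1 : ∀ u ∈ U, 1 ≤ ∑ v ∈ E, a v * g v u := by
    intro u hu
    have hsum : ∑ v ∈ E, a v * (1 - ∑ i, v i * u i) = 1 := by
      simp only [mul_sub, mul_one, Finset.sum_sub_distrib, ha1]
      have : ∑ v ∈ E, a v * ∑ i, v i * u i = ∑ i, (∑ v ∈ E, a v • v) i * u i := by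
        simp only [Finset.mul_sum, Finset.sum_apply, Pi.smul_apply, smul_eq_mul, Finset.sum_mul]
        rw [Finset.sum_comm]
        simp only [mul_assoc]
      rw [this, haz]; simp
    rw [← hsum]
    refine Finset.sum_le_sum fun v hv => mul_le_mul_of_nonneg_left ?_ (ha0 v hv)
    obtain ⟨m, hm⟩ := aux_int (hUm u hu).2 (hdual v (hEm v hv))
    have h1 : -1 ≤ ∑ i, v i * u i := (hEm v hv).1 u (hUm u hu).1.1
    simp only [g, hm] at h1 ⊢
    have h2 : -1 ≤ m := by exact_mod_cast h1
    rcases (by omega : m = -1 ∨ m = 0 ∨ 1 ≤ m) with rfl | rfl | h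
    · norm_num
    · norm_num
    · have h3 : (1 : ℝ) ≤ m := by exact_mod_cast h
      rw [if_neg (by linarith), if_neg (by linarith)]
      linarith
  have hg2 : ∀ v ∈ E, ∑ u ∈ U, g v u ≤ 3 * n := by
    intro v hv
    simp only [g, Finset.sum_add_distrib, ← Finset.mul_sum, Finset.sum_boole]
    obtain ⟨⟨b, -⟩, -⟩ := aux_basis n hn S Q hQ hsimp (hEm v hv)
    obtain ⟨hfin, hcard⟩ := aux_card b
    have c1 : (U.filter fun u => ∑ i, v i * u i = -1).card ≤ n := by
      refine le_trans ?_ hcard.le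
      rw [← Set.ncard_coe_finset]
      refine Set.ncard_le_ncard (fun u hu => ?_) hfin
      have hu' := Finset.mem_filter.1 hu
      exact ⟨(hUm u hu'.1).1, hu'.2⟩
    have c2 : (U.filter fun u => ∑ i, v i * u i = 0).card ≤ n := by
      refine le_trans ?_ (aux_zero n hn S Q hQ h0 hsimp hdual (hEm v hv))
      rw [← Set.ncard_coe_finset]
      refine Set.ncard_le_ncard (fun u hu => ?_) (hUfin.subset fun u hu => hu.1)
      have hu' := Finset.mem_filter.1 hu
      exact ⟨hUm u hu'.1, hu'.2⟩
    have c1' : ((U.filter fun u => ∑ i, v i * u i = -1).card : ℝ) ≤ n := by exact_mod_cast c1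
    have c2' : ((U.filter fun u => ∑ i, v i * u i = 0).card : ℝ) ≤ n := by exact_mod_cast c2
    linarith
  have hfinal : (U.card : ℝ) ≤ 3 * n := by
    calc (U.card : ℝ) = ∑ u ∈ U, 1 := by simp
      _ ≤ ∑ u ∈ U, ∑ v ∈ E, a v * g v u := Finset.sum_le_sum hg1
      _ = ∑ v ∈ E, a v * ∑ u ∈ U, g v u := by
        rw [Finset.sum_comm]; simp only [Finset.mul_sum]
      _ ≤ ∑ v ∈ E, a v * (3 * n) :=
        Finset.sum_le_sum fun v hv => mul_le_mul_of_nonneg_left (hg2 v hv) (ha0 v hv)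
      _ = 3 * n := by rw [← Finset.sum_mul, ha1, one_mul]
  exact_mod_cast hfinal
end

section
/- Let n ≥ 1, let p₁,…,pₙ ∈ ℝⁿ be linearly independent vectors, and let a > 0 and V > 0 be real numbers with |det(p₁,…,pₙ)| ≥ 1/a. Let Q ⊆ ℝⁿ be a convex set with vol(Q) ≤ V that contains 0 and p₁,…,pₙ. Then every point u ∈ Q, written u = Σ_{i=1}^n c_i·p_i, satisfies |c_i| ≤ n!·a·V for every i; that is, Q is contained in the parallelepiped {Σ c_i p_i : |c_i| ≤ n!·a·V}. -/
theorem aux_vol (n : ℕ) :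
    ENNReal.ofReal (1 / (n.factorial : ℝ)) ≤
      MeasureTheory.volume {x : Fin n → ℝ | (∀ i, 0 ≤ x i) ∧ ∑ i, x i ≤ 1} := by
  set S : Set (Fin n → ℝ) := {x : Fin n → ℝ | (∀ i, 0 ≤ x i) ∧ ∑ i, x i ≤ 1} with hS
  have hb := MeasureTheory.volume_sum_rpow_lt_one (Fin n) (p := 1) le_rfl
  have hG : Real.Gamma (1 + 1) = 1 := by simpa using Real.Gamma_nat_eq_factorial 1
  simp only [Real.rpow_one, Fintype.card_fin, div_one, hG, mul_one,
    Real.Gamma_nat_eq_factorial] at hb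
  let s : (Fin n → Bool) → Fin n → ℝ := fun e i => if e i then 1 else -1
  have hs : ∀ e i, s e i * s e i = 1 := by
    intro e i
    by_cases h : e i <;> simp [s, h]
  have hsa : ∀ e i, |s e i| = 1 := by
    intro e i
    by_cases h : e i <;> simp [s, h]
  have hsub : {x : Fin n → ℝ | ∑ i, |x i| < 1} ⊆
      ⋃ e : Fin n → Bool, (Matrix.toLin' (Matrix.diagonal (s e))) '' S := by
    intro x hx
    refine Set.mem_iUnion.2 ⟨fun i => decide (0 ≤ x i), fun i => |x i|,
      ⟨fun i => abs_nonneg _, le_of_lt hx⟩, ?_⟩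
    ext i
    rw [Matrix.toLin'_apply, Matrix.mulVec_diagonal]
    by_cases h : 0 ≤ x i
    · simp [s, h, abs_of_nonneg h]
    · simp [s, h, abs_of_neg (not_le.1 h)]
  have hle := (MeasureTheory.measure_mono (μ := MeasureTheory.volume) hsub).trans
    (MeasureTheory.measure_iUnion_fintype_le _ _)
  have hv : ∀ e, MeasureTheory.volume ((Matrix.toLin' (Matrix.diagonal (s e))) '' S)
      = MeasureTheory.volume S := by
    intro e
    rw [MeasureTheory.Measure.addHaar_image_linearMap, LinearMap.det_toLin', Matrix.det_diagonal,
      Finset.abs_prod]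
    simp [hsa]
  rw [hb] at hle
  simp only [hv, Finset.sum_const, Finset.card_univ, Fintype.card_fun, Fintype.card_bool,
    Fintype.card_fin, nsmul_eq_mul] at hle
  have h2 : ENNReal.ofReal ((2:ℝ) ^ n / n.factorial)
      = ((2 ^ n : ℕ) : ENNReal) * ENNReal.ofReal (1 / (n.factorial : ℝ)) := by
    rw [← ENNReal.ofReal_natCast, ← ENNReal.ofReal_mul (by positivity)]
    congr 1
    push_cast
    ring
  rw [h2] at hle
  exact (ENNReal.mul_le_mul_iff_right (by simp) (ENNReal.natCast_ne_top _)).1 hle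

theorem aux_conv {n : ℕ} {Q : Set (Fin n → ℝ)} (hQ : Convex ℝ Q) (h0 : (0 : Fin n → ℝ) ∈ Q)
    (q : Fin n → Fin n → ℝ) (hq : ∀ i, q i ∈ Q) (y : Fin n → ℝ) (hy : ∀ i, 0 ≤ y i)
    (hy1 : ∑ i, y i ≤ 1) : ∑ i, y i • q i ∈ Q := by
  have := hQ.sum_mem (t := Finset.univ) (w := fun o : Option (Fin n) => o.elim (1 - ∑ i, y i) y)
    (z := fun o : Option (Fin n) => o.elim 0 q)
    (by rintro (_ | i) _ <;> simp [hy, hy1]) (by simp [Fintype.sum_option])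
    (by rintro (_ | i) _ <;> simp [h0, hq])
  simpa [Fintype.sum_option] using this


/-- Claim inside the proof of Theorem 3.7.  Let `p₁,…,pₙ ∈ ℝⁿ` be linearly
independent with `|det(p₁,…,pₙ)| ≥ 1/a`, and let `Q ⊆ ℝⁿ` be a convex set of volume
at most `V` containing `0` and the `pᵢ`.  Then every `u ∈ Q`, written
`u = Σ cᵢ pᵢ`, satisfies `|cᵢ| ≤ n!·a·V` for every `i`. -/
theorem stmt10 (n : ℕ) (hn : 1 ≤ n)
    (p : Fin n → (Fin n → ℝ)) (hli : LinearIndependent ℝ p)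
    (a V : ℝ) (ha : 0 < a) (hV : 0 < V)
    (hdet : 1 / a ≤ |Matrix.det (Matrix.of fun i j => p j i)|)
    (Q : Set (Fin n → ℝ)) (hQconv : Convex ℝ Q)
    (hvol : MeasureTheory.volume Q ≤ ENNReal.ofReal V)
    (h0 : (0 : Fin n → ℝ) ∈ Q) (hp : ∀ i, p i ∈ Q) :
    ∀ u ∈ Q, ∀ c : Fin n → ℝ, u = ∑ i, c i • p i →
      ∀ i, |c i| ≤ (n.factorial : ℝ) * a * V := by
  intro u hu c hc i
  set A : Matrix (Fin n) (Fin n) ℝ := Matrix.of fun i j => p j i with hA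
  set B := A.updateCol i u with hB
  have hBdet : B.det = c i * A.det := by
    rw [hB, ← smul_eq_mul, ← Matrix.det_updateCol_sum A i c]
    congr 2
    ext k
    simp [hc, hA, Finset.sum_apply]
  have hsub : (Matrix.toLin' B) '' {x : Fin n → ℝ | (∀ i, 0 ≤ x i) ∧ ∑ i, x i ≤ 1} ⊆ Q := by
    rintro _ ⟨y, ⟨hy, hy1⟩, rfl⟩
    have h := aux_conv hQconv h0 (fun j => B.transpose j) (fun j => ?_) y hy hy1
    · convert h using 1
      ext k
      simp [Matrix.toLin'_apply, Matrix.mulVec, dotProduct, Finset.sum_apply, mul_comm]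
    · by_cases hj : j = i
      · subst hj
        convert hu using 1
        ext k
        simp [hB]
      · convert hp j using 1
        ext k
        simp [hB, hA, Matrix.updateCol_apply, hj]
  have h1 := (MeasureTheory.measure_mono (μ := MeasureTheory.volume) hsub).trans hvol
  rw [MeasureTheory.Measure.addHaar_image_linearMap, LinearMap.det_toLin'] at h1
  have h2 := (mul_le_mul_right (aux_vol n) (ENNReal.ofReal |B.det|)).trans h1
  rw [← ENNReal.ofReal_mul (abs_nonneg _), ENNReal.ofReal_le_ofReal_iff hV.le, hBdet, abs_mul,
    mul_one_div, div_le_iff₀ (by positivity)] at h2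
  have h3 : |c i| * (1 / a) ≤ V * n.factorial :=
    (mul_le_mul_of_nonneg_left hdet (abs_nonneg _)).trans h2
  rw [mul_one_div, div_le_iff₀ ha] at h3
  linarith
end

section
/- Let n, a, k be strictly positive integers and let Q ⊆ ℝⁿ be a convex polytope all of whose vertices lie in ℤⁿ, such that the interior of Q contains exactly k points of the sublattice a·ℤⁿ. Then vol(Q) ≤ k·aⁿ·(7(ka+1))^{n·2^{n+1}}. -/
open MeasureTheory in
open scoped Pointwise in
theorem lz_blich (n k : ℕ) (A : Set (Fin n → ℝ)) (hA : MeasurableSet A)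
    (h : (k : ENNReal) < volume A) :
    ∃ y : Fin n → ℝ, ∃ G : Finset (Fin n → ℝ), k < G.card ∧
      ∀ g ∈ G, (∀ i, ∃ m : ℤ, g i = m) ∧ y + g ∈ A := by
  classical
  by_contra hcon
  push Not at hcon
  have hF := ZSpan.isAddFundamentalDomain' (Pi.basisFun ℝ (Fin n)) (volume : Measure (Fin n → ℝ))
  have : Countable (Submodule.span ℤ (Set.range (Pi.basisFun ℝ (Fin n)))).toAddSubgroup :=
    inferInstanceAs (Countable (Submodule.span ℤ (Set.range (Pi.basisFun ℝ (Fin n)))))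
  have hFv : volume (ZSpan.fundamentalDomain (Pi.basisFun ℝ (Fin n))) = 1 := by
    rw [ZSpan.fundamentalDomain_pi_basisFun]
    simp [volume_pi_pi]
  refine absurd h (not_lt.mpr ?_)
  rw [hF.measure_eq_tsum A, ENNReal.tsum_eq_iSup_sum]
  refine iSup_le fun G => ?_
  set F := ZSpan.fundamentalDomain (Pi.basisFun ℝ (Fin n)) with hFdef
  have hm : ∀ g : (Submodule.span ℤ (Set.range (Pi.basisFun ℝ (Fin n)))).toAddSubgroup, MeasurableSet (g +ᵥ A) :=
    fun g => hA.const_vadd g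
  have h1 : ∀ g : (Submodule.span ℤ (Set.range (Pi.basisFun ℝ (Fin n)))).toAddSubgroup,
      volume ((g +ᵥ A) ∩ F) = ∫⁻ x in F, (g +ᵥ A).indicator 1 x := by
    intro g
    rw [lintegral_indicator_one (hm g), Measure.restrict_apply (hm g)]
  simp_rw [h1]
  rw [← lintegral_finsetSum]
  swap
  · intro g _
    exact measurable_one.indicator (hm g)
  calc _ ≤ ∫⁻ x in F, (k : ENNReal) := by
        refine lintegral_mono fun x => ?_
        simp only [Set.indicator_apply, Pi.one_apply, Finset.sum_boole]
        norm_cast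
        by_contra hlt
        push Not at hlt
        let G' : Finset (Fin n → ℝ) := (G.filter fun g => x ∈ g +ᵥ A).image
          (fun g : (Submodule.span ℤ (Set.range (Pi.basisFun ℝ (Fin n)))).toAddSubgroup => -(g : Fin n → ℝ))
        have hc : k < G'.card := by
          rw [Finset.card_image_of_injective]
          · exact hlt
          · intro u v huv
            exact Subtype.ext (neg_injective huv)
        obtain ⟨g, hg, hg2⟩ := hcon x G' hc
        simp only [G', Finset.mem_image, Finset.mem_filter] at hg
        obtain ⟨u, ⟨_, hu⟩, rfl⟩ := hg
        refine hg2 ?_ ?_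
        · intro i
          have := (Module.Basis.mem_span_iff_repr_mem ℤ (Pi.basisFun ℝ (Fin n)) _).1 u.2 i
          obtain ⟨m, hm⟩ := this
          refine ⟨-m, ?_⟩
          simp at hm
          simp [hm]
        · rw [Set.mem_vadd_set_iff_neg_vadd_mem] at hu
          convert hu using 1
          rw [add_comm]; rfl
    _ = k := by simp [hFv]

open MeasureTheory in
theorem lz_mink {ι : Type*} [Fintype ι] (l : ι → ℝ) (hl : ∀ i, 0 < l i) (hl1 : ∑ i, l i < 1)
    (D : ℝ) (hD : 1 ≤ D) (h : 1 - ∑ i, l i < ∏ i, (l i / D)) :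
    ∃ p : ι → ℤ, 1 ≤ ∑ i, p i ∧ ∀ i, |(p i : ℝ) - l i * ((∑ i, p i : ℤ) : ℝ)| < l i / D := by
  classical
  have hF := ZSpan.isAddFundamentalDomain' (Pi.basisFun ℝ ι) (volume : Measure (ι → ℝ))
  have : Countable (Submodule.span ℤ (Set.range (Pi.basisFun ℝ ι))).toAddSubgroup :=
    inferInstanceAs (Countable (Submodule.span ℤ (Set.range (Pi.basisFun ℝ ι))))
  have hFv : volume (ZSpan.fundamentalDomain (Pi.basisFun ℝ ι)) = 1 := by
    rw [ZSpan.fundamentalDomain_pi_basisFun]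
    simp [volume_pi_pi]
  let M : Matrix ι ι ℝ := Matrix.of fun i j => (if i = j then 1 else 0) - l i
  have hM : M = 1 + Matrix.replicateCol Unit (-l) * Matrix.replicateRow Unit (fun _ : ι => (1 : ℝ)) := by
    ext i j
    simp [M, Matrix.mul_apply, Matrix.one_apply, sub_eq_add_neg]
  have hdet : LinearMap.det (Matrix.toLin' M) = 1 - ∑ i, l i := by
    rw [LinearMap.det_toLin', hM, Matrix.det_one_add_replicateCol_mul_replicateRow]
    simp [dotProduct]; ring
  have happ : ∀ p i, Matrix.toLin' M p i = p i - l i * ∑ j, p j := by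
    intro p i
    simp [M, Matrix.toLin'_apply, Matrix.mulVec, dotProduct, 
      Finset.mul_sum, sub_mul, Finset.sum_sub_distrib]
  let B : Set (ι → ℝ) := Set.univ.pi fun i => Set.Ioo (-(l i / D)) (l i / D)
  let K : Set (ι → ℝ) := Matrix.toLin' M ⁻¹' B
  have hpos : 0 < 1 - ∑ i, l i := by linarith
  have hBv : volume B = ENNReal.ofReal (2 ^ Fintype.card ι * ∏ i, (l i / D)) := by
    rw [Real.volume_pi_Ioo, ← ENNReal.ofReal_prod_of_nonneg]
    · congr 1
      rw [← Finset.card_univ, ← Finset.prod_const, ← Finset.prod_mul_distrib]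
      exact Finset.prod_congr rfl fun i _ => by ring
    · intro i _
      have := div_pos (hl i) (by linarith : 0 < D)
      linarith
  have hKv : volume K = ENNReal.ofReal ((1 - ∑ i, l i)⁻¹ * (2 ^ Fintype.card ι * ∏ i, (l i / D))) := by
    rw [Measure.addHaar_preimage_linearMap _ (by rw [hdet]; exact hpos.ne'), hdet, hBv,
      abs_of_pos (inv_pos.2 hpos), ← ENNReal.ofReal_mul (inv_pos.2 hpos).le]
  have hKmem : ∀ p, p ∈ K ↔ ∀ i, |p i - l i * ∑ j, p j| < l i / D := by
    intro p
    simp only [K, B, Set.mem_preimage, Set.mem_pi, Set.mem_univ, true_imp_iff, happ, Set.mem_Ioo,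
      abs_lt]
  have hlt : volume (ZSpan.fundamentalDomain (Pi.basisFun ℝ ι)) * 2 ^ Module.finrank ℝ (ι → ℝ)
      < volume K := by
    rw [hFv, hKv, one_mul, Module.finrank_fintype_fun_eq_card]
    have : (2 : ENNReal) ^ Fintype.card ι = ENNReal.ofReal (2 ^ Fintype.card ι) := by
      rw [ENNReal.ofReal_pow (by norm_num)]; norm_num
    rw [this]
    have h2 : (0 : ℝ) < 2 ^ Fintype.card ι := by positivity
    refine (ENNReal.ofReal_lt_ofReal_iff_of_nonneg h2.le).2 ?_
    rw [inv_mul_eq_div, lt_div_iff₀ hpos]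
    exact mul_lt_mul_of_pos_left h h2
  have hconv : Convex ℝ K := (convex_pi fun i _ => convex_Ioo _ _).is_linear_preimage
    (Matrix.toLin' M).isLinear
  have hsymm : ∀ x ∈ K, -x ∈ K := by
    intro x hx
    rw [hKmem] at hx ⊢
    intro i
    rw [← abs_neg]
    convert hx i using 2
    simp; ring
  have key : ∃ x : ι → ℤ, x ≠ 0 ∧ (fun i => (x i : ℝ)) ∈ K := by
    obtain ⟨x, hx0, hxK⟩ := exists_ne_zero_mem_lattice_of_measure_mul_two_pow_lt_measure
      (L := (Submodule.span ℤ (Set.range (Pi.basisFun ℝ ι))).toAddSubgroup) hF hsymm hconv hlt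
    have := (Module.Basis.mem_span_iff_repr_mem ℤ (Pi.basisFun ℝ ι) _).1 x.2
    choose m hm using this
    have hmx : (fun i => (m i : ℝ)) = (x : ι → ℝ) := by
      funext i; simpa using hm i
    refine ⟨m, ?_, hmx ▸ hxK⟩
    rintro rfl
    apply hx0
    apply Subtype.ext
    rw [← hmx]; ext; simp
  have key2 : ∃ x : ι → ℤ, x ≠ 0 ∧ 0 ≤ ∑ i, x i ∧ (fun i => (x i : ℝ)) ∈ K := by
    obtain ⟨x, h0, hK⟩ := key
    rcases le_total 0 (∑ i, x i) with hs | hs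
    · exact ⟨x, h0, hs, hK⟩
    · refine ⟨-x, by simpa using h0, by simpa using hs, ?_⟩
      have := hsymm _ hK
      convert this using 1
      ext; simp
  obtain ⟨x, h0, hs, hK⟩ := key2
  rw [hKmem] at hK
  refine ⟨x, ?_, fun i => by simpa using hK i⟩
  by_contra hq
  have hq0 : ∑ i, x i = 0 := by omega
  have hq0' : ∑ i, (x i : ℝ) = 0 := by exact_mod_cast hq0
  apply h0
  funext i
  have h3 := hK i
  rw [hq0', mul_zero, sub_zero] at h3
  have h4 : l i < 1 := lt_of_le_of_lt (Finset.single_le_sum (fun j _ => (hl j).le) (Finset.mem_univ i)) hl1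
  have h5 : l i / D < 1 := by
    rw [div_lt_one (by linarith)]; linarith
  have : |(x i : ℝ)| < 1 := h3.trans h5
  have : |x i| < 1 := by exact_mod_cast this
  exact Int.abs_lt_one_iff.1 this

theorem lz_pick {ι : Type*} [DecidableEq ι] (f : ι → ℝ) (c : ℝ) (U : Finset ι) :
    U.Nonempty → c * (1 - (1/2) ^ U.card) ≤ ∑ i ∈ U, f i →
    ∃ V ⊆ U, V.Nonempty ∧ ∀ i ∈ V, c * (1/2) ^ V.card ≤ f i := by
  induction U using Finset.strongInduction with
  | H U ih =>
    intro hU hs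
    obtain ⟨m, hm, hmin⟩ := U.exists_min_image f hU
    by_cases hc : c * (1/2) ^ U.card ≤ f m
    · exact ⟨U, subset_rfl, hU, fun i hi => hc.trans (hmin i hi)⟩
    push Not at hc
    have hcard : (U.erase m).card + 1 = U.card := Finset.card_erase_add_one hm
    have hsum : ∑ i ∈ U.erase m, f i + f m = ∑ i ∈ U, f i := Finset.sum_erase_add _ _ hm
    have hge : c * (1 - (1/2) ^ (U.erase m).card) < ∑ i ∈ U.erase m, f i := by
      rw [← hcard, pow_succ] at hc hs
      linarith
    have hne : (U.erase m).Nonempty := by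
      rw [Finset.nonempty_iff_ne_empty]
      intro he
      rw [he] at hge
      simp at hge
    obtain ⟨V, hV, h1, h2⟩ := ih _ (Finset.erase_ssubset hm) hne hge.le
    exact ⟨V, hV.trans (Finset.erase_subset _ _), h1, h2⟩

theorem lz_prod {ι : Type*} [Fintype ι] [DecidableEq ι] (x : ι → ℝ) (hx : ∀ i, 0 < x i)
    (hx1 : ∀ i, x i ≤ 1) (D : ℝ) (hD : 1 ≤ D)
    (h : ∀ T : Finset ι, (∃ i, i ∉ T) → ∏ i ∈ T, x i ≤ D * ∑ i ∈ (Finset.univ.filter (· ∉ T) : Finset ι), x i) (i : ι) :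
    ((4 * D) ^ (2 ^ Fintype.card ι))⁻¹ ≤ x i := by
  classical
  have hD0 : (0 : ℝ) < D := by linarith
  let J : Finset ι → Prop := fun T => ((4 * D) ^ (2 ^ T.card - 1))⁻¹ ≤ ∏ i ∈ T, x i
  have h0 : J ∅ := by simp [J]
  have hstep : ∀ T, J T → (∃ i, i ∉ T) → ∃ T', T.card < T'.card ∧ J T' := by
    intro T hT hne
    have hsum := h T hne
    set P := ∏ i ∈ T, x i with hP
    have hPpos : 0 < P := Finset.prod_pos fun i _ => hx i
    obtain ⟨V, hV, hVne, hVge⟩ := lz_pick x (P / D) (Finset.univ.filter (· ∉ T))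
      (by obtain ⟨i, hi⟩ := hne; exact ⟨i, by simpa using hi⟩)
      (by
        have h1 : P / D ≤ ∑ i ∈ (Finset.univ.filter (· ∉ T) : Finset ι), x i := by
          rw [div_le_iff₀ hD0]; linarith
        refine le_trans ?_ h1
        refine mul_le_of_le_one_right (by positivity) ?_
        have : (0 : ℝ) ≤ (1 / 2) ^ (Finset.univ.filter (· ∉ T) : Finset ι).card := by positivity
        linarith)
    have hdisj : Disjoint T V := by
      rw [Finset.disjoint_left]
      intro i hi hi2
      have := hV hi2
      simp at this
      exact this hi
    refine ⟨T ∪ V, ?_, ?_⟩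
    · rw [Finset.card_union_of_disjoint hdisj]
      have := hVne.card_pos
      omega
    · show _ ≤ _
      rw [Finset.card_union_of_disjoint hdisj, Finset.prod_union hdisj, ← hP]
      have hs : 1 ≤ V.card := hVne.card_pos
      generalize hsd : V.card = s at *
      have hprod : (P / D * (1/2) ^ s) ^ s ≤ ∏ i ∈ V, x i := by
        rw [← hsd, ← Finset.prod_const]
        exact Finset.prod_le_prod (fun i _ => by positivity) (fun i hi => by rw [hsd]; exact hVge i hi)
      refine le_trans ?_ (mul_le_mul_of_nonneg_left hprod hPpos.le)
      have hT' : ((4 * D) ^ (2 ^ T.card - 1))⁻¹ ≤ P := hT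
      generalize T.card = t at *
      set E := ((4 * D) ^ (2 ^ t - 1))⁻¹ with hE
      have hEpos : 0 < E := by positivity
      have hmono : E * (E / D * (1/2) ^ s) ^ s ≤ P * (P / D * (1/2) ^ s) ^ s := by gcongr
      refine le_trans ?_ hmono
      have e1 : E * (E / D * (1/2) ^ s) ^ s = ((4 * D) ^ ((2 ^ t - 1) * (1 + s)) * D ^ s * 2 ^ (s * s))⁻¹ := by
        have hC : 4 * D ≠ 0 := by positivity
        rw [hE]
        clear * - hC hD0
        generalize 4 * D = C at *
        generalize 2 ^ t - 1 = u
        rw [mul_add, mul_one, pow_add, pow_mul, pow_mul, one_div, inv_pow, mul_pow, div_pow]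
        simp only [inv_pow, mul_inv, div_eq_mul_inv]
        ring
      rw [e1]
      apply inv_anti₀ (by positivity)
      have h2s : s * s ≤ 2 * (2 ^ s - 1) := by
        clear * - hs
        induction s, hs using Nat.le_induction with
        | base => norm_num
        | succ m hm ih =>
          have : m < 2 ^ m := Nat.lt_two_pow_self
          rw [pow_succ]
          have : (m + 1) * (m + 1) = m * m + 2 * m + 1 := by ring
          omega
      have hs2 : s ≤ 2 ^ s - 1 := by
        have : s < 2 ^ s := Nat.lt_two_pow_self
        omega
      calc (4 * D) ^ ((2 ^ t - 1) * (1 + s)) * D ^ s * 2 ^ (s * s)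
          ≤ (4 * D) ^ ((2 ^ t - 1) * 2 ^ s) * D ^ (2 ^ s - 1) * 2 ^ (2 * (2 ^ s - 1)) := by
            have : 1 ≤ 4 * D := by linarith
            have : 1 + s ≤ 2 ^ s := by
              have : s < 2 ^ s := Nat.lt_two_pow_self
              omega
            gcongr <;> norm_num
        _ = (4 * D) ^ (2 ^ (t + s) - 1) := by
            have : 2 ^ (t + s) - 1 = (2 ^ t - 1) * 2 ^ s + (2 ^ s - 1) := by
              rw [pow_add, Nat.sub_mul, one_mul]
              have h1 : 1 ≤ 2 ^ s := Nat.one_le_two_pow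
              have h2 : 2 ^ s ≤ 2 ^ t * 2 ^ s := Nat.le_mul_of_pos_left _ (by positivity)
              omega
            rw [this, pow_add, mul_pow 4 D (2 ^ s - 1), pow_mul 2 2]
            norm_num
            ring
  have hall : J Finset.univ := by
    obtain ⟨T, hT, hmax⟩ := (Finset.univ.filter J : Finset (Finset ι)).exists_max_image Finset.card
      ⟨∅, by simpa using h0⟩
    by_cases hne : ∃ i, i ∉ T
    · obtain ⟨T', h1, h2⟩ := hstep T (by simpa using hT) hne
      have := hmax T' (by simpa using h2)
      omega
    · push Not at hne
      have : T = Finset.univ := Finset.eq_univ_iff_forall.2 hne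
      rw [← this]; simpa using hT
  have hle : ∏ j, x j ≤ x i := by
    rw [← Finset.mul_prod_erase _ _ (Finset.mem_univ i)]
    exact mul_le_of_le_one_right (hx i).le (Finset.prod_le_one (fun j _ => (hx j).le) fun j _ => hx1 j)
  refine le_trans ?_ hle
  refine le_trans ?_ hall
  apply inv_anti₀ (by positivity)
  exact pow_le_pow_right₀ (by linarith) (by rw [Finset.card_univ]; exact Nat.sub_le _ _)

theorem lz_mink' {ι : Type*} [Fintype ι] [DecidableEq ι] (w : ι → ℝ) (hw : ∀ i, 0 < w i)
    (T : Finset ι) (hT1 : ∑ i ∈ T, w i < 1)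
    (D : ℝ) (hD : 1 ≤ D) (h : 1 - ∑ i ∈ T, w i < ∏ i ∈ T, (w i / D)) :
    ∃ p : ι → ℤ, (∀ i ∉ T, p i = 0) ∧ 1 ≤ ∑ i, p i ∧
      ∀ i ∈ T, |(p i : ℝ) - w i * ((∑ i, p i : ℤ) : ℝ)| < w i / D := by
  obtain ⟨p, hp1, hp2⟩ := lz_mink (fun i : T => w i) (fun i => hw i)
    (by rwa [Finset.sum_coe_sort T w]) D hD
    (by rwa [Finset.sum_coe_sort T w, Finset.prod_coe_sort T (fun i => w i / D)])
  let p' : ι → ℤ := fun i => if h : i ∈ T then p ⟨i, h⟩ else 0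
  have hs : ∑ i, p' i = ∑ i, p i := by
    have h1 : ∑ i, p' i = ∑ i ∈ T, p' i :=
      (Finset.sum_subset (Finset.subset_univ T) (fun i _ hi => by simp [p', hi])).symm
    rw [h1, ← Finset.sum_coe_sort T p']
    exact Finset.sum_congr rfl fun i _ => by simp [p']
  refine ⟨p', fun i hi => by simp [p', hi], by rw [hs]; exact hp1, fun i hi => ?_⟩
  rw [hs]
  have := hp2 ⟨i, hi⟩
  simpa [p', hi] using this

theorem lz_relint {E ι : Type*} [NormedAddCommGroup E] [NormedSpace ℝ E] [Fintype ι] (P : Set E)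
    (hP : Convex ℝ P) (v : ι → E) (hv : ∀ i, v i ∈ P) (w μ : ι → ℝ) (hw : ∀ i, 0 < w i)
    (hw1 : ∑ i, w i = 1) (hx : ∑ i, w i • v i ∈ interior P) (hμ : ∀ i, 0 < μ i)
    (hμ1 : ∑ i, μ i = 1) : ∑ i, μ i • v i ∈ interior P := by
  have hne : (Finset.univ : Finset ι).Nonempty := by
    rw [Finset.nonempty_iff_ne_empty]; intro he; rw [he] at hw1; simp at hw1
  obtain ⟨m, _, hm⟩ := Finset.univ.exists_min_image μ hne
  have hle : ∀ i, w i ≤ 1 := fun i => by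
    rw [← hw1]; exact Finset.single_le_sum (fun j _ => (hw j).le) (Finset.mem_univ i)
  have hm1 : μ m ≤ 1 := by
    rw [← hμ1]; exact Finset.single_le_sum (fun j _ => (hμ j).le) (Finset.mem_univ m)
  have hmp := hμ m
  set θ := μ m / 2 with hθ
  have hθ1 : 0 < 1 - θ := by linarith
  have hz : ∑ i, ((μ i - θ * w i) / (1 - θ)) • v i ∈ P := by
    refine hP.sum_mem (fun i _ => ?_) ?_ (fun i _ => hv i)
    · refine div_nonneg ?_ hθ1.le
      have h1 := hm i (Finset.mem_univ i)
      have h2 := hle i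
      have h3 : θ * w i ≤ θ * 1 := by gcongr
      linarith
    · rw [← Finset.sum_div, Finset.sum_sub_distrib, ← Finset.mul_sum, hw1, hμ1, mul_one,
        div_self hθ1.ne']
  have := hP.combo_interior_self_mem_interior hx hz (a := θ) (b := 1 - θ) (by linarith) hθ1.le (by ring)
  convert this using 1
  rw [Finset.smul_sum, Finset.smul_sum, ← Finset.sum_add_distrib]
  refine Finset.sum_congr rfl fun i _ => ?_
  rw [smul_smul, smul_smul, ← add_smul]
  congr 1
  field_simp
  ring

theorem lz_simplex (n a k : ℕ) (ha : 0 < a) (hk : 0 < k) (P : Set (Fin n → ℝ)) (hP : Convex ℝ P)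
    (hint : Set.ncard {u ∈ interior P | ∀ i, ∃ m : ℤ, u i = (a : ℝ) * (m : ℝ)} = k)
    {ι : Type*} [Fintype ι] (v : ι → Fin n → ℝ) (hv : ∀ i, v i ∈ P)
    (hvl : ∀ i j, ∃ m : ℤ, v i j = m) (hind : AffineIndependent ℝ v)
    (w : ι → ℝ) (hw : ∀ i, 0 < w i) (hw1 : ∑ i, w i = 1) (x : Fin n → ℝ)
    (hx : ∑ i, w i • v i = x) (hxi : x ∈ interior P)
    (hxl : ∀ i, ∃ m : ℤ, x i = (a : ℝ) * (m : ℝ)) (i : ι) :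
    ((7 * ((k : ℝ) * (a : ℝ) + 1)) ^ (2 ^ (n + 1)))⁻¹ ≤ w i := by
  classical
  have ha' : (1 : ℝ) ≤ a := by exact_mod_cast ha
  have hk' : (1 : ℝ) ≤ k := by exact_mod_cast hk
  have hD : (1 : ℝ) ≤ (k : ℝ) * a := by nlinarith
  set D : ℝ := (k : ℝ) * a with hDdef
  have hD0 : 0 < D := by linarith
  have hle : ∀ i, w i ≤ 1 := fun i => by
    rw [← hw1]; exact Finset.single_le_sum (fun j _ => (hw j).le) (Finset.mem_univ i)
  have hcard : Fintype.card ι ≤ n + 1 := by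
    have h1 := hind.card_le_finrank_succ
    have h2 : Module.finrank ℝ (vectorSpan ℝ (Set.range v)) ≤ n := by
      simpa using Submodule.finrank_le (vectorSpan ℝ (Set.range v))
    omega
  have main := lz_prod (fun i => w i / D) (fun i => div_pos (hw i) hD0)
    (fun i => by rw [div_le_one hD0]; exact (hle i).trans hD) D hD ?_ i
  · have h1 : w i / D ≤ w i := div_le_self (hw i).le hD
    refine le_trans ?_ (main.trans h1)
    apply inv_anti₀ (by positivity)
    calc (4 * D) ^ (2 ^ Fintype.card ι) ≤ (7 * (D + 1)) ^ (2 ^ Fintype.card ι) := by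
          gcongr <;> linarith
      _ ≤ _ := pow_le_pow_right₀ (by linarith) (Nat.pow_le_pow_right (by norm_num) hcard)
  · rintro T ⟨i₀, hi₀⟩
    rw [← Finset.sum_div, mul_div_cancel₀ _ hD0.ne']
    by_contra hcon
    push Not at hcon
    have hsplit : ∑ i ∈ T, w i + ∑ i ∈ Finset.univ.filter (· ∉ T), w i = 1 := by
      rw [← hw1, ← Finset.sum_filter_add_sum_filter_not Finset.univ (· ∈ T)]
      simp
    have hpos : 0 < ∑ i ∈ Finset.univ.filter (· ∉ T), w i :=
      Finset.sum_pos (fun i _ => hw i) ⟨i₀, by simpa using hi₀⟩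
    obtain ⟨p, hp0, hp1, hp2⟩ := lz_mink' w hw T (by linarith) D hD (by linarith)
    set q : ℤ := ∑ i, p i with hq
    let μ : ℕ → ι → ℝ := fun j i => w i + a * j * (q * w i - p i)
    let y : ℕ → Fin n → ℝ := fun j => ∑ i, μ j i • v i
    have hq0 : (1 : ℝ) ≤ q := by exact_mod_cast hp1
    have hqs : (q : ℝ) = ∑ i, (p i : ℝ) := by rw [hq]; push_cast; rfl
    have hμ1 : ∀ j, ∑ i, μ j i = 1 := by
      intro j
      simp only [μ]
      rw [Finset.sum_add_distrib, ← Finset.mul_sum, Finset.sum_sub_distrib, ← Finset.mul_sum, hw1,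
        ← hqs]
      ring
    have hμpos : ∀ j ≤ k, ∀ i, 0 < μ j i := by
      intro j hj i
      have hj' : (j : ℝ) ≤ k := by exact_mod_cast hj
      by_cases hi : i ∈ T
      · have h1 := (abs_lt.1 (hp2 i hi)).2
        have h2 : (p i - w i * q) * D < w i := by rwa [lt_div_iff₀ hD0] at h1
        simp only [μ]
        have h3 : (a : ℝ) * j ≤ D := by rw [hDdef]; nlinarith
        have h4 : (0 : ℝ) ≤ a * j := by positivity
        have h5 := hw i
        by_cases h6 : (p i : ℝ) - w i * q ≤ 0
        · have : 0 ≤ (a : ℝ) * j * (q * w i - p i) := mul_nonneg h4 (by linarith)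
          linarith
        · push Not at h6
          have : ((p i : ℝ) - w i * q) * (a * j) ≤ (p i - w i * q) * D := by gcongr
          nlinarith
      · simp only [μ, hp0 i hi]
        have := hw i
        push_cast
        have h7 : 0 ≤ (a : ℝ) * j * (q * w i - 0) := by
          have : 0 ≤ (q : ℝ) * w i := by positivity
          rw [sub_zero]; positivity
        linarith
    have hinj : Function.Injective y := by
      intro j j' hjj
      have h1 := (affineIndependent_iff.1 hind) Finset.univ (fun i => μ j i - μ j' i)
        (by rw [Finset.sum_sub_distrib, hμ1, hμ1, sub_self])
        (by
          simp only [sub_smul]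
          rw [Finset.sum_sub_distrib]
          exact sub_eq_zero.2 hjj) i₀ (Finset.mem_univ _)
      simp only [μ, hp0 i₀ hi₀] at h1
      push_cast at h1
      have h2 : ((a : ℝ) * q * w i₀) * ((j : ℝ) - j') = 0 := by linarith
      have h3 : ((a : ℝ) * q * w i₀) ≠ 0 := by
        have := hw i₀
        positivity
      have h4 := (mul_eq_zero.1 h2).resolve_left h3
      have : (j : ℝ) = j' := by linarith
      exact_mod_cast this
    have hmem : ∀ j ≤ k, y j ∈ {u ∈ interior P | ∀ i, ∃ m : ℤ, u i = (a : ℝ) * (m : ℝ)} := by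
      intro j hj
      refine ⟨lz_relint P hP v hv w (μ j) hw hw1 (hx ▸ hxi) (hμpos j hj) (hμ1 j), ?_⟩
      intro c
      obtain ⟨m, hm⟩ := hxl c
      choose V hV using hvl
      refine ⟨(1 + a * j * q) * m - j * ∑ i, p i * V i c, ?_⟩
      have hy : y j c = ∑ i, μ j i * v i c := by simp [y, Finset.sum_apply]
      have hxc : ∑ i, w i * v i c = x c := by rw [← hx]; simp [Finset.sum_apply]
      rw [hy]
      simp only [μ]
      have : ∀ i, (w i + a * j * (q * w i - p i)) * v i c
          = (1 + a * j * q) * (w i * v i c) - a * j * (p i * V i c) := by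
        intro i; rw [hV]; ring
      simp_rw [this]
      rw [Finset.sum_sub_distrib, ← Finset.mul_sum, ← Finset.mul_sum, hxc, hm]
      push_cast
      ring
    have hfin := Set.finite_of_ncard_pos (by rw [hint]; exact hk :
      0 < Set.ncard {u ∈ interior P | ∀ i, ∃ m : ℤ, u i = (a : ℝ) * (m : ℝ)})
    have := Set.ncard_le_ncard (s := (((Finset.range (k+1)).image y : Finset _) : Set (Fin n → ℝ)))
      (by
        intro u hu
        simp only [Finset.coe_image, Set.mem_image, Finset.mem_coe, Finset.mem_range] at hu
        obtain ⟨j, hj, rfl⟩ := hu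
        exact hmem j (by omega)) hfin
    rw [Set.ncard_coe_finset, Finset.card_image_of_injective _ hinj, hint, Finset.card_range] at this
    omega

open Filter Topology in
theorem lz_asym (n a k : ℕ) (ha : 0 < a) (hk : 0 < k) (S : Finset (Fin n → ℝ))
    (hSlat : ∀ s ∈ S, ∀ i, ∃ m : ℤ, s i = (m : ℝ)) (P : Set (Fin n → ℝ))
    (hPS : P = convexHull ℝ (S : Set (Fin n → ℝ)))
    (hint : Set.ncard {u ∈ interior P | ∀ i, ∃ m : ℤ, u i = (a : ℝ) * (m : ℝ)} = k)
    (x : Fin n → ℝ) (hxi : x ∈ interior P)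
    (hxl : ∀ i, ∃ m : ℤ, x i = (a : ℝ) * (m : ℝ)) (ε : ℝ) (hε1 : ε < 1) (hε0 : 0 < ε)
    (hε : ε = ((7 * ((k : ℝ) * (a : ℝ) + 1)) ^ (2 ^ (n + 1)))⁻¹) (s : Fin n → ℝ) (hs : s ∈ S) :
    x + (ε / (1 - ε)) • (x - s) ∈ P := by
  have hP : Convex ℝ P := hPS ▸ convex_convexHull ℝ _
  have hSP : ∀ u ∈ S, u ∈ P := fun u hu => hPS ▸ subset_convexHull ℝ _ hu
  have hPc : IsCompact P := hPS ▸ S.finite_toSet.isCompact_convexHull ℝ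
  have hxP := interior_subset hxi
  by_cases hxs : x = s
  · rw [← hxs]; simpa using hxP
  have hd : 0 < ‖x - s‖ := norm_pos_iff.2 (sub_ne_zero.2 hxs)
  let L : ℝ → Fin n → ℝ := fun c => x + c • (x - s)
  have hL : Continuous L := by fun_prop
  obtain ⟨R, hR⟩ := hPc.isBounded.exists_norm_le
  have hCc : IsCompact {c : ℝ | 0 ≤ c ∧ L c ∈ P} := by
    refine (isCompact_Icc (a := (0 : ℝ)) (b := (R + ‖x‖) / ‖x - s‖)).of_isClosed_subset ?_ ?_
    · exact isClosed_Ici.inter (hPc.isClosed.preimage hL)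
    · rintro c ⟨h0, hc⟩
      refine ⟨h0, ?_⟩
      rw [le_div_iff₀ hd]
      have h1 : c * ‖x - s‖ = ‖L c - x‖ := by
        simp [L, norm_smul, abs_of_nonneg h0]
      rw [h1]
      exact (norm_sub_le _ _).trans (by gcongr; exact hR _ hc)
  obtain ⟨c, ⟨hc0, hcP⟩, hcmax⟩ := hCc.exists_isGreatest ⟨0, le_rfl, by simpa [L] using hxP⟩
  have hcpos : 0 < c := by
    have h1 : ∀ᶠ c in 𝓝 (0 : ℝ), L c ∈ P :=
      hL.continuousAt.eventually_mem (by
        have : L 0 = x := by simp [L]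
        rw [this]; exact mem_interior_iff_mem_nhds.1 hxi)
    have h2 : ∀ᶠ c in 𝓝[>] (0 : ℝ), L c ∈ P ∧ 0 < c :=
      (h1.filter_mono nhdsWithin_le_nhds).and self_mem_nhdsWithin
    obtain ⟨c', h3, h4⟩ := h2.exists
    exact h4.trans_le (hcmax ⟨h4.le, h3⟩)
  have hy := hcP
  rw [hPS] at hy
  obtain ⟨ι, _, z, w, hz, hind, hw, hw1, hwz⟩ := eq_pos_convex_span_of_mem_convexHull hy
  have hzS : ∀ i, z i ∈ S := fun i => hz ⟨i, rfl⟩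
  let v : Option ι → Fin n → ℝ := fun o => o.elim s z
  let w' : Option ι → ℝ := fun o => o.elim (c / (1 + c)) (fun i => w i / (1 + c))
  have hvS : ∀ o, v o ∈ S := by rintro (_ | i); exacts [hs, hzS i]
  have h1c : 0 < 1 + c := by linarith
  have hindv : AffineIndependent ℝ v := by
    rw [affineIndependent_iff_of_fintype]
    intro g hg hg2
    rw [Finset.weightedVSub_eq_linear_combination _ hg] at hg2
    rw [Fintype.sum_option] at hg hg2
    simp only [v, Option.elim] at hg2
    have hnone : g none = 0 := by
      by_contra hne
      have hev : ∀ᶠ η in 𝓝[>] (0 : ℝ), (∀ i, 0 < w i + η * (g (some i) / g none)) ∧ 0 < η := by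
        refine Filter.Eventually.and (Filter.Eventually.filter_mono nhdsWithin_le_nhds ?_)
          self_mem_nhdsWithin
        rw [Filter.eventually_all]
        intro i
        have : Continuous fun η : ℝ => w i + η * (g (some i) / g none) := by fun_prop
        exact this.continuousAt.eventually_mem (Ioi_mem_nhds (by simpa using hw i))
      obtain ⟨η, hη, hη0⟩ := hev.exists
      have hsum : ∑ i, g (some i) / g none = -1 := by
        rw [← Finset.sum_div, div_eq_iff hne]; linarith
      have hsz : ∑ i, (g (some i) / g none) • z i = -s := by
        have : ∑ i, (g (some i) / g none) • z i = (g none)⁻¹ • ∑ i, g (some i) • z i := by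
          rw [Finset.smul_sum]
          exact Finset.sum_congr rfl fun i _ => by rw [smul_smul]; congr 1; ring
        rw [this, eq_neg_of_add_eq_zero_right hg2, smul_neg, smul_smul, inv_mul_cancel₀ hne, one_smul]
      have hmem : ∑ i, ((w i + η * (g (some i) / g none)) + η * w i) • z i ∈ P := by
        refine hP.sum_mem (fun i _ => ?_) ?_ (fun i _ => hSP _ (hzS i))
        · have := hη i
          have := hw i
          positivity
        · rw [Finset.sum_add_distrib, Finset.sum_add_distrib, ← Finset.mul_sum, ← Finset.mul_sum,
            hsum, hw1]
          ring
      have heq : ∑ i, ((w i + η * (g (some i) / g none)) + η * w i) • z i = L (c + η + η * c) := by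
        simp only [add_smul, mul_smul]
        rw [Finset.sum_add_distrib, Finset.sum_add_distrib, ← Finset.smul_sum, ← Finset.smul_sum,
            hsz, hwz]
        simp only [L]
        module
      have := hcmax ⟨by positivity, heq ▸ hmem⟩
      nlinarith [mul_pos hη0 hcpos]
    rw [hnone, zero_add] at hg
    rw [hnone, zero_smul, zero_add] at hg2
    have := (affineIndependent_iff.1 hind) Finset.univ (fun i => g (some i)) hg hg2
    rintro (_ | i)
    exacts [hnone, this i (Finset.mem_univ i)]
  have key := lz_simplex n a k ha hk P hP hint v (fun o => hSP _ (hvS o)) (fun o => hSlat _ (hvS o))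
    hindv w' (by
      rintro (_ | i)
      · exact div_pos hcpos h1c
      · exact div_pos (hw i) h1c)
    (by
      rw [Fintype.sum_option]
      simp only [w', Option.elim]
      rw [← Finset.sum_div, hw1]
      field_simp; ring) x
    (by
      rw [Fintype.sum_option]
      simp only [w', v, Option.elim]
      have : ∑ i, (w i / (1 + c)) • z i = (1 + c)⁻¹ • ∑ i, w i • z i := by
        rw [Finset.smul_sum]
        exact Finset.sum_congr rfl fun i _ => by rw [smul_smul]; congr 1; ring
      rw [this, hwz]
      simp only [L]
      match_scalars <;> field_simp <;> ring)
    hxi hxl none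
  rw [← hε] at key
  simp only [w', Option.elim] at key
  have he : ε / (1 - ε) ≤ c := by
    rw [le_div_iff₀ h1c] at key
    rw [div_le_iff₀ (by linarith)]
    linarith
  have he0 : 0 ≤ ε / (1 - ε) := div_nonneg hε0.le (by linarith)
  have := hP.add_smul_sub_mem hxP hcP (t := (ε / (1 - ε)) / c)
    ⟨by positivity, by rw [div_le_one hcpos]; exact he⟩
  convert this using 1
  simp only [L, add_sub_cancel_left, smul_smul]
  rw [div_mul_cancel₀ _ hcpos.ne']

open MeasureTheory in
open scoped Pointwise in
theorem stmt11 (n a k : ℕ) (hn : 0 < n) (ha : 0 < a) (hk : 0 < k)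
    (S : Finset (Fin n → ℝ))
    (hSlat : ∀ s ∈ S, ∀ i, ∃ m : ℤ, s i = (m : ℝ))
    (Q : Set (Fin n → ℝ)) (hQ : Q = convexHull ℝ (S : Set (Fin n → ℝ)))
    (hint : Set.ncard {u ∈ interior Q | ∀ i, ∃ m : ℤ, u i = (a : ℝ) * (m : ℝ)} = k) :
    MeasureTheory.volume Q ≤
      ENNReal.ofReal ((k : ℝ) * (a : ℝ) ^ n *
        (7 * ((k : ℝ) * (a : ℝ) + 1)) ^ (n * 2 ^ (n + 1))) := by
  classical
  have hfin := Set.finite_of_ncard_pos (by rw [hint]; exact hk :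
      0 < Set.ncard {u ∈ interior Q | ∀ i, ∃ m : ℤ, u i = (a : ℝ) * (m : ℝ)})
  obtain ⟨x, hxi, hxl⟩ := Set.nonempty_of_ncard_ne_zero (by rw [hint]; exact hk.ne' :
      Set.ncard {u ∈ interior Q | ∀ i, ∃ m : ℤ, u i = (a : ℝ) * (m : ℝ)} ≠ 0)
  have hP : Convex ℝ Q := hQ ▸ convex_convexHull ℝ _
  have ha0 : (0 : ℝ) < a := by exact_mod_cast ha
  have hk0 : (0 : ℝ) < k := by exact_mod_cast hk
  set B : ℝ := 7 * ((k : ℝ) * (a : ℝ) + 1) with hB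
  have hB1 : 1 < B := by have : 0 < (k : ℝ) * a := by positivity
                         linarith
  set ε : ℝ := (B ^ (2 ^ (n + 1)))⁻¹ with hε
  have hε0 : 0 < ε := by positivity
  have hε1 : ε < 1 := inv_lt_one_of_one_lt₀ (one_lt_pow₀ hB1 (by positivity))
  have hasym : ∀ u ∈ Q, x + (ε / (1 - ε)) • (x - u) ∈ Q := by
    have hc : Convex ℝ {u | x + (ε / (1 - ε)) • (x - u) ∈ Q} := by
      intro u hu u' hu' s t hs ht hst
      have := hP hu hu' hs ht hst
      show _ ∈ Q
      convert this using 1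
      have : t = 1 - s := by linarith
      subst this
      module
    have := convexHull_min (s := (S : Set (Fin n → ℝ))) (fun s hs =>
      lz_asym n a k ha hk S hSlat Q hQ hint x hxi hxl ε hε1 hε0 hε s hs) hc
    rw [← hQ] at this
    exact this
  by_contra hcon
  push Not at hcon
  let A : Set (Fin n → ℝ) := (ε / a) • ((fun h => x + h) ⁻¹' interior Q)
  have hr : 0 < ε / a := by positivity
  have hAm : MeasurableSet A :=
    ((isOpen_interior.preimage (continuous_const_add x)).smul₀ hr.ne').measurableSet
  have hvolint : volume (interior Q) = volume Q := by
    exact measure_congr (interior_ae_eq_of_null_frontier (hP.addHaar_frontier volume))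
  have hAv : (k : ENNReal) < volume A := by
    rw [Measure.addHaar_smul, measure_preimage_add, hvolint, Module.finrank_fin_fun,
      abs_of_pos (by positivity)]
    have h1 : (k : ENNReal) = ENNReal.ofReal ((ε / a) ^ n) *
        ENNReal.ofReal ((k : ℝ) * (a : ℝ) ^ n * B ^ (n * 2 ^ (n + 1))) := by
      rw [← ENNReal.ofReal_mul (by positivity), ← ENNReal.ofReal_natCast]
      congr 1
      rw [hε, mul_comm n, pow_mul, div_pow, inv_pow]
      field_simp
    rw [h1]
    exact (ENNReal.mul_lt_mul_iff_right (by simpa using by positivity) ENNReal.ofReal_ne_top).2 hcon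
  obtain ⟨y, G, hG, hGA⟩ := lz_blich n k A hAm hAv
  have hex : ∀ g ∈ G, ∃ u ∈ interior Q, y + g = (ε / a) • (u - x) := by
    intro g hg
    obtain ⟨h, hh, he⟩ := (hGA g hg).2
    exact ⟨x + h, hh, by rw [← he]; simp⟩
  obtain ⟨g0, hg0⟩ := Finset.card_pos.1 (by omega : 0 < G.card)
  obtain ⟨u0, hu0, he0⟩ := hex g0 hg0
  have hmem : ∀ g ∈ G, x + (a : ℝ) • (g - g0) ∈
      {u ∈ interior Q | ∀ i, ∃ m : ℤ, u i = (a : ℝ) * (m : ℝ)} := by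
    intro g hg
    obtain ⟨u, hu, he⟩ := hex g hg
    constructor
    · have := hP.combo_interior_self_mem_interior hu (hasym u0 (interior_subset hu0)) (a := ε)
        (b := 1 - ε) hε0 (by linarith) (by ring)
      convert this using 1
      have h1 : g - g0 = (ε / a) • (u - u0) := by
        have : g - g0 = (y + g) - (y + g0) := by abel
        rw [this, he, he0]; module
      have h2 : (1 : ℝ) - ε ≠ 0 := by linarith
      rw [h1, smul_smul, mul_div_cancel₀ _ ha0.ne', smul_add, smul_smul, mul_div_cancel₀ _ h2]
      module
    · intro i
      obtain ⟨m, hm⟩ := hxl i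
      obtain ⟨m1, hm1⟩ := (hGA g hg).1 i
      obtain ⟨m0, hm0⟩ := (hGA g0 hg0).1 i
      refine ⟨m + (m1 - m0), ?_⟩
      simp [hm, hm1, hm0]
      ring
  have hinj : Function.Injective fun g : Fin n → ℝ => x + (a : ℝ) • (g - g0) := by
    intro g g' h
    have h1 := smul_right_injective _ ha0.ne' (add_left_cancel h)
    exact sub_left_injective h1
  have := Set.ncard_le_ncard
    (s := ((G.image fun g => x + (a : ℝ) • (g - g0) : Finset _) : Set (Fin n → ℝ)))
    (by
      intro u hu
      simp only [Finset.coe_image, Set.mem_image, Finset.mem_coe] at hu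
      obtain ⟨g, hg, rfl⟩ := hu
      exact hmem g hg) hfin
  rw [Set.ncard_coe_finset, Finset.card_image_of_injective _ hinj, hint] at this
  omega
end
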